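/- Let L > 0 and fix feedback gains α, β with 0 < |α| < 1 and β > 0. There exist constants κ > 0 and θ > 0, depending only on L, α and β, such that every classical solution u of the closed-loop linear KP-II system on [0,L]² × [0,∞) satisfies E(t) ≤ κ · E(0) · e^{−2θt} for all t > 0. -/

import Mathlib

open MeasureTheory Real

noncomputable section

/-- Partial derivative in `x` of `u(x,y,t)`. -/
def pdx (u : ℝ → ℝ → ℝ → ℝ) (x y t : ℝ) : ℝ := deriv (fun x' => u x' y t) x

/-- Third partial derivative in `x` of `u(x,y,t)`. -/
def pdx3 (u : ℝ → ℝ → ℝ → ℝ) (x y t : ℝ) : ℝ := iteratedDeriv 3 (fun x' => u x' y t) x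

/-- Partial derivative in `y` of `u(x,y,t)`. -/
def pdy (u : ℝ → ℝ → ℝ → ℝ) (x y t : ℝ) : ℝ := deriv (fun y' => u x y' t) y

/-- Second partial derivative in `y` of `u(x,y,t)`. -/
def pdy2 (u : ℝ → ℝ → ℝ → ℝ) (x y t : ℝ) : ℝ := iteratedDeriv 2 (fun y' => u x y' t) y

/-- Partial derivative in `t` of `u(x,y,t)`. -/
def pdt (u : ℝ → ℝ → ℝ → ℝ) (x y t : ℝ) : ℝ := deriv (fun t' => u x y t') t

/-- The nonlocal operator `(∂ₓ⁻¹ w)(x,y) = -∫ₓ^L w(s,y) ds`. -/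
def pxInv (L : ℝ) (w : ℝ → ℝ → ℝ) (x y : ℝ) : ℝ := -(∫ s in x..L, w s y)

/-- A classical solution of the closed-loop linear KP-II system on `[0,L]² × [0,∞)`:
`u` is `C³`, satisfies `u_t + u_x + u_xxx + ∂ₓ⁻¹ u_yy = 0` on `Ω × (0,∞)` and the
boundary feedback conditions for all `t ≥ 0`. -/
def IsKPSolutionInf (L α β : ℝ) (u : ℝ → ℝ → ℝ → ℝ) : Prop :=
  ContDiff ℝ 3 (fun p : ℝ × ℝ × ℝ => u p.1 p.2.1 p.2.2) ∧
  (∀ x ∈ Set.Ioo (0:ℝ) L, ∀ y ∈ Set.Ioo (0:ℝ) L, ∀ t ∈ Set.Ioi (0:ℝ),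
      pdt u x y t + pdx u x y t + pdx3 u x y t
        + pxInv L (fun s y' => pdy2 u s y' t) x y = 0) ∧
  (∀ y ∈ Set.Icc (0:ℝ) L, ∀ t ∈ Set.Ici (0:ℝ),
      u 0 y t = 0 ∧ u L y t = 0 ∧ pdx u L y t = α * pdx u 0 y t) ∧
  (∀ x ∈ Set.Icc (0:ℝ) L, ∀ t ∈ Set.Ici (0:ℝ),
      pdy u x L t = β * pdx u x L t ∧ pdy u x 0 t = 0)

/-- The energy `E(t) = ½ ∫_Ω u(x,y,t)² dx dy`. -/
def energy (L : ℝ) (u : ℝ → ℝ → ℝ → ℝ) (t : ℝ) : ℝ :=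
  (1/2) * ∫ x in (0:ℝ)..L, ∫ y in (0:ℝ)..L, (u x y t)^2

/-! Pairing the equation with `u` shows that the energy is dissipated through the traces of `u_x`
and `∂ₓ⁻¹ u_y` on `x = 0` and of `u` on `y = L`; pairing it with `x u` controls `u_x` and
`∂ₓ⁻¹ u_y` inside the square (Kato smoothing). Together they give a bound for the resolvent
equation `w_x + w_xxx + ∂ₓ⁻¹ w_yy - iωw = g` that is uniform in `ω`, once `‖w‖` is absorbed:

* at low frequency, `w_y = z_x` and `z_y = g + iωw - w_x - w_xxx` form a plate equation evolving
  in `y`, whose energy with the weight `e^{μy}`, `μ` large, is controlled by its trace on `y = L`;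
* at high frequency, testing with the Dirichlet inverse of `∂ₓ²` gains a factor `1 / |ω|` in a
  negative norm of `w`, and `‖w‖` follows by interpolation with `‖w_x‖`.

For a cut-off `c` vanishing at the ends of a time interval, the Fourier coefficients of `c u` solve
the resolvent equation with source the coefficients of `c' u`, so that Parseval's identity yields
`∫ c² E ≤ C ∫ c'² E`. A slow half-period of a sine for `c`, together with the monotonicity of `E`,
makes the energy halve over a time that does not depend on the solution. -/

section Calculus

open Function

theorem hasDerivAt_intervalIntegral_of_continuous {f f' : ℝ → ℝ → ℝ}
    (hf : Continuous (uncurry f)) (hf' : Continuous (uncurry f'))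
    (h : ∀ y s, HasDerivAt (fun y => f y s) (f' y s) y) (a b y : ℝ) :
    HasDerivAt (fun y => ∫ s in a..b, f y s) (∫ s in a..b, f' y s) y := by
  obtain ⟨M, hM⟩ := ((isCompact_Icc (a := y - 1) (b := y + 1)).prod
    (isCompact_uIcc (a := a) (b := b))).exists_bound_of_continuousOn hf'.continuousOn
  refine (intervalIntegral.hasDerivAt_integral_of_dominated_loc_of_deriv_le
    (bound := fun _ => M) (s := Set.Icc (y - 1) (y + 1))
    (Icc_mem_nhds (by linarith) (by linarith)) ?_ ?_ ?_ ?_ intervalIntegrable_const ?_).2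
  · exact .of_forall fun x => (show Continuous (f x) by fun_prop).aestronglyMeasurable
  · exact (show Continuous (f y) by fun_prop).intervalIntegrable _ _
  · exact (show Continuous (f' y) by fun_prop).aestronglyMeasurable
  · exact .of_forall fun t ht x hx => hM (x, t) ⟨hx, Set.uIoc_subset_uIcc ht⟩
  · exact .of_forall fun t _ x _ => h x t

theorem hasDerivAt_const_add_const_mul (a b x : ℝ) :
    HasDerivAt (fun x : ℝ => a + b * x) b x := by
  simpa using ((hasDerivAt_id x).const_mul b).const_add a

theorem intervalIntegral_swap_of_continuous {f : ℝ → ℝ → ℝ} (hf : Continuous (uncurry f))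
    (a b c d : ℝ) :
    ∫ x in a..b, ∫ y in c..d, f x y = ∫ y in c..d, ∫ x in a..b, f x y :=
  intervalIntegral_intervalIntegral_swap <|
    (hf.continuousOn.integrableOn_compact (isCompact_uIcc.prod isCompact_uIcc)).mono_set <|
      Set.prod_mono Set.uIoc_subset_uIcc Set.uIoc_subset_uIcc

theorem sq_intervalIntegral_le {f : ℝ → ℝ} (hf : Continuous f) {a b : ℝ} (hab : a ≤ b) :
    (∫ x in a..b, f x) ^ 2 ≤ (b - a) * ∫ x in a..b, f x ^ 2 := by
  obtain rfl | hab := hab.eq_or_lt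
  · simp
  set I := ∫ x in a..b, f x
  have hl : 0 < b - a := sub_pos.2 hab
  have young : ∫ x in a..b, 2 * I * f x ≤ ∫ x in a..b, ((b - a)⁻¹ * I ^ 2 + (b - a) * f x ^ 2) :=
    intervalIntegral.integral_mono_on hab.le (Continuous.intervalIntegrable (by fun_prop) _ _)
      (Continuous.intervalIntegrable (by fun_prop) _ _) fun x _ => by
      linarith [two_mul_le_add_mul_sq (a := f x) (b := I) hl]
  rw [intervalIntegral.integral_const_mul, intervalIntegral.integral_add
    intervalIntegrable_const (Continuous.intervalIntegrable (by fun_prop) _ _),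
    intervalIntegral.integral_const, intervalIntegral.integral_const_mul, smul_eq_mul,
    mul_inv_cancel_left₀ hl.ne'] at young
  change 2 * I * I ≤ _ at young
  linarith

theorem abs_intervalIntegral_mul_le {f g : ℝ → ℝ} (hf : Continuous f) (hg : Continuous g)
    {a b : ℝ} (hab : a ≤ b) :
    |∫ x in a..b, f x * g x| ≤ ((∫ x in a..b, f x ^ 2) + ∫ x in a..b, g x ^ 2) / 2 := by
  rw [← intervalIntegral.integral_add (Continuous.intervalIntegrable (by fun_prop) _ _)
    (Continuous.intervalIntegrable (by fun_prop) _ _), ← intervalIntegral.integral_div]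
  refine (intervalIntegral.abs_integral_le_integral_abs hab).trans <|
    intervalIntegral.integral_mono_on hab (Continuous.intervalIntegrable (by fun_prop) _ _)
      (Continuous.intervalIntegrable (by fun_prop) _ _) fun x _ => ?_
  rw [abs_mul, ← sq_abs (f x), ← sq_abs (g x)]
  linarith [two_mul_le_add_sq |f x| |g x|]

theorem hasSum_intervalIntegral_of_nonneg {ι : Type*} [Countable ι] {F : ι → ℝ → ℝ} {f : ℝ → ℝ}
    (hF : ∀ n, Continuous (F n)) (hf : Continuous f) (hF₀ : ∀ n x, 0 ≤ F n x)
    (h : ∀ x, HasSum (fun n => F n x) (f x)) (a b : ℝ) :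
    HasSum (fun n => ∫ x in a..b, F n x) (∫ x in a..b, f x) := by
  refine intervalIntegral.hasSum_integral_of_dominated_convergence F
    (fun n => (hF n).aestronglyMeasurable)
    (fun n => .of_forall fun x _ => (norm_of_nonneg (hF₀ n x)).le)
    (.of_forall fun x _ => (h x).summable) ?_ (.of_forall fun x _ => h x)
  simpa only [(h _).tsum_eq] using hf.intervalIntegrable a b

theorem integral_sin_sq_half_period {l : ℝ} (hl : l ≠ 0) (a : ℝ) :
    ∫ t in a..a + π / l, sin (l * (t - a)) ^ 2 = π / l / 2 := by
  rw [intervalIntegral.integral_comp_sub_right (fun t => sin (l * t) ^ 2), sub_self,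
    add_sub_cancel_left, intervalIntegral.integral_comp_mul_left (fun t => sin t ^ 2) hl, mul_zero,
    mul_div_cancel₀ π hl, integral_sin_sq, sin_zero, sin_pi, smul_eq_mul]
  ring

theorem integral_cos_sq_half_period {l : ℝ} (hl : l ≠ 0) (a : ℝ) :
    ∫ t in a..a + π / l, cos (l * (t - a)) ^ 2 = π / l / 2 := by
  rw [intervalIntegral.integral_comp_sub_right (fun t => cos (l * t) ^ 2), sub_self,
    add_sub_cancel_left, intervalIntegral.integral_comp_mul_left (fun t => cos t ^ 2) hl, mul_zero,
    mul_div_cancel₀ π hl, integral_cos_sq, sin_zero, sin_pi, smul_eq_mul]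
  ring

theorem mul_le_integral_sin_sq_mul {m : ℝ → ℝ} {l a : ℝ} (hl : 0 < l) (hm : Continuous m)
    (hanti : AntitoneOn m (Set.Icc a (a + π / l))) :
    m (a + π / l) * (π / l / 2) ≤ ∫ t in a..a + π / l, sin (l * (t - a)) ^ 2 * m t := by
  have hab : a ≤ a + π / l := le_add_of_nonneg_right (by positivity)
  rw [← integral_sin_sq_half_period hl.ne' a, mul_comm, ← intervalIntegral.integral_mul_const]
  refine intervalIntegral.integral_mono_on hab (Continuous.intervalIntegrable (by fun_prop) _ _)
    (Continuous.intervalIntegrable (by fun_prop) _ _) fun t ht => ?_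
  gcongr
  exact hanti ht (Set.right_mem_Icc.2 hab) ht.2

theorem integral_cos_sq_mul_le {m : ℝ → ℝ} {l a : ℝ} (hl : 0 < l) (hm : Continuous m)
    (hanti : AntitoneOn m (Set.Icc a (a + π / l))) :
    ∫ t in a..a + π / l, cos (l * (t - a)) ^ 2 * m t ≤ m a * (π / l / 2) := by
  have hab : a ≤ a + π / l := le_add_of_nonneg_right (by positivity)
  rw [← integral_cos_sq_half_period hl.ne' a, mul_comm, ← intervalIntegral.integral_mul_const]
  refine intervalIntegral.integral_mono_on hab (Continuous.intervalIntegrable (by fun_prop) _ _)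
    (Continuous.intervalIntegrable (by fun_prop) _ _) fun t ht => ?_
  gcongr
  exact hanti (Set.left_mem_Icc.2 hab) ht ht.1

end Calculus

section Fourier

theorem fourierCoeffOn_ofReal {g : ℝ → ℝ} (hg : Continuous g) {a b : ℝ} (hab : a < b) (n : ℤ) :
    fourierCoeffOn hab (fun t => (g t : ℂ)) n = ((b - a)⁻¹ : ℝ) *
      (((∫ t in a..b, cos (2 * π * n / (b - a) * t) * g t : ℝ) : ℂ)
        + ((-∫ t in a..b, sin (2 * π * n / (b - a) * t) * g t : ℝ) : ℂ) * Complex.I) := by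
  rw [fourierCoeffOn_eq_integral, one_div, Complex.real_smul, Complex.ofReal_neg,
    ← intervalIntegral.integral_ofReal, ← intervalIntegral.integral_ofReal, neg_mul,
    ← sub_eq_add_neg, ← intervalIntegral.integral_mul_const, ← intervalIntegral.integral_sub
      (Continuous.intervalIntegrable (by fun_prop) _ _)
      (Continuous.intervalIntegrable (by fun_prop) _ _)]
  congr 1
  refine intervalIntegral.integral_congr fun t _ => ?_
  have phase : (2 * π * Complex.I * ((-n : ℤ) : ℂ) * t / ((b - a : ℝ) : ℂ) : ℂ)
      = ((-(2 * π * n / (b - a) * t) : ℝ) : ℂ) * Complex.I := by push_cast; ring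
  simp only [fourier_coe_apply, phase, smul_eq_mul, Complex.exp_mul_I, ← Complex.ofReal_cos,
    ← Complex.ofReal_sin, cos_neg, sin_neg]
  push_cast
  ring

theorem hasSum_sq_integral_cos_add_sq_integral_sin {g : ℝ → ℝ} (hg : Continuous g) {a b : ℝ}
    (hab : a < b) :
    HasSum (fun n : ℤ => (∫ t in a..b, cos (2 * π * n / (b - a) * t) * g t) ^ 2
        + (∫ t in a..b, sin (2 * π * n / (b - a) * t) * g t) ^ 2)
      ((b - a) * ∫ t in a..b, g t ^ 2) := by
  have hl : b - a ≠ 0 := (sub_pos.2 hab).ne'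
  obtain ⟨M, hM⟩ := (isCompact_Icc (a := a) (b := b)).exists_bound_of_continuousOn hg.continuousOn
  have square_integrable : MemLp (fun t => (g t : ℂ)) 2 (volume.restrict (Set.Ioc a b)) :=
    .of_bound (Continuous.aestronglyMeasurable (by fun_prop)) M <|
      (ae_restrict_mem measurableSet_Ioc).mono fun t ht => by
        simpa using hM t (Set.Ioc_subset_Icc_self ht)
  have term (n : ℤ) : (b - a) ^ 2 * ‖fourierCoeffOn hab (fun t => (g t : ℂ)) n‖ ^ 2
      = (∫ t in a..b, cos (2 * π * n / (b - a) * t) * g t) ^ 2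
        + (∫ t in a..b, sin (2 * π * n / (b - a) * t) * g t) ^ 2 := by
    rw [fourierCoeffOn_ofReal hg, ← Complex.normSq_eq_norm_sq, map_mul, Complex.normSq_ofReal,
      Complex.normSq_add_mul_I]
    field_simp
  have total : (b - a) ^ 2 * (b - a)⁻¹ • ∫ t in a..b, ‖(g t : ℂ)‖ ^ 2
      = (b - a) * ∫ t in a..b, g t ^ 2 := by
    simp only [Complex.norm_real, norm_eq_abs, sq_abs, smul_eq_mul]
    field_simp
  rw [← total, ← funext term]
  exact (hasSum_sq_fourierCoeffOn hab square_integrable).mul_left _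

end Fourier

theorem le_exp_of_halving {m : ℝ → ℝ} {T : ℝ} (hT : 0 < T) (hm : AntitoneOn m (Set.Ici 0))
    (hm₀ : 0 ≤ m 0) (half : ∀ t ≥ 0, m (t + T) ≤ m t / 2) {t : ℝ} (ht : 0 ≤ t) :
    m t ≤ 2 * m 0 * exp (-(log 2 / T * t)) := by
  have iterate (n : ℕ) : m (n * T) ≤ m 0 * exp (-(n * log 2)) := by
    induction n with
    | zero => simp
    | succ n ih =>
      calc m ((n + 1 : ℕ) * T) = m (n * T + T) := by push_cast; ring_nf
        _ ≤ m (n * T) / 2 := half _ (by positivity)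
        _ ≤ m 0 * exp (-(n * log 2)) / 2 := by gcongr
        _ = m 0 * exp (-((n + 1 : ℕ) * log 2)) := by
          rw [show -(((n + 1 : ℕ) : ℝ) * log 2) = -(n * log 2) - log 2 by push_cast; ring,
            exp_sub, exp_log two_pos, mul_div_assoc]
  set n := ⌊t / T⌋₊
  have floor_le : n * T ≤ t := (le_div_iff₀ hT).1 (Nat.floor_le (by positivity))
  have lt_floor : t / T ≤ n + 1 := (Nat.lt_floor_add_one _).le
  calc m t ≤ m (n * T) := hm (Set.mem_Ici.2 (by positivity)) ht floor_le
    _ ≤ m 0 * exp (-(n * log 2)) := iterate n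
    _ ≤ m 0 * exp (log 2 - log 2 / T * t) := by
      gcongr
      have := mul_le_mul_of_nonneg_right lt_floor (log_pos one_lt_two).le
      linarith [show t / T * log 2 = log 2 / T * t by ring]
    _ = 2 * m 0 * exp (-(log 2 / T * t)) := by
      rw [sub_eq_add_neg, exp_add, exp_log two_pos]; ring

/-- The integral of `f` over the square `(0,L)²`, the variable `x` being integrated first. -/
def squareInt (L : ℝ) (f : ℝ → ℝ → ℝ) : ℝ := ∫ y in (0:ℝ)..L, ∫ x in (0:ℝ)..L, f x y

/-- The squared `L²(0,L)` norm of the row `f(·,y)`. -/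
def rowMass (L : ℝ) (f : ℝ → ℝ → ℝ) (y : ℝ) : ℝ := ∫ x in (0:ℝ)..L, f x y ^ 2

/-- The squared `L²` norm of `f` on the square `(0,L)²`. -/
def mass (L : ℝ) (f : ℝ → ℝ → ℝ) : ℝ := squareInt L fun x y => f x y ^ 2

/-- The squared `L²` norm of `f` on the square with the weight `e^{μy}`. -/
def expMass (L μ : ℝ) (f : ℝ → ℝ → ℝ) : ℝ := squareInt L fun x y => exp (μ * y) * f x y ^ 2

section SquareIntegral

open Function

variable {L : ℝ} {f g : ℝ → ℝ → ℝ}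

@[fun_prop]
theorem continuous_rowMass (hf : Continuous (uncurry f)) : Continuous (rowMass L f) := by
  unfold rowMass
  fun_prop

theorem squareInt_add (hf : Continuous (uncurry f)) (hg : Continuous (uncurry g)) :
    squareInt L (fun x y => f x y + g x y) = squareInt L f + squareInt L g := by
  unfold squareInt
  rw [← intervalIntegral.integral_add (Continuous.intervalIntegrable (by fun_prop) _ _)
    (Continuous.intervalIntegrable (by fun_prop) _ _)]
  congr with y
  exact intervalIntegral.integral_add (Continuous.intervalIntegrable (by fun_prop) _ _)
    (Continuous.intervalIntegrable (by fun_prop) _ _)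

theorem squareInt_const_mul (c : ℝ) (f : ℝ → ℝ → ℝ) :
    squareInt L (fun x y => c * f x y) = c * squareInt L f := by
  simp [squareInt]

theorem squareInt_sub (hf : Continuous (uncurry f)) (hg : Continuous (uncurry g)) :
    squareInt L (fun x y => f x y - g x y) = squareInt L f - squareInt L g := by
  have h := squareInt_add (L := L) hf (g := fun x y => -1 * g x y) (by fun_prop)
  rw [squareInt_const_mul] at h
  simpa only [neg_one_mul, ← sub_eq_add_neg] using h

theorem squareInt_mono (hL : 0 ≤ L) (hf : Continuous (uncurry f)) (hg : Continuous (uncurry g))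
    (h : ∀ x ∈ Set.Icc 0 L, ∀ y ∈ Set.Icc 0 L, f x y ≤ g x y) : squareInt L f ≤ squareInt L g :=
  intervalIntegral.integral_mono_on hL (Continuous.intervalIntegrable (by fun_prop) _ _)
    (Continuous.intervalIntegrable (by fun_prop) _ _) fun y hy =>
      intervalIntegral.integral_mono_on hL (Continuous.intervalIntegrable (by fun_prop) _ _)
        (Continuous.intervalIntegrable (by fun_prop) _ _) fun x hx => h x hx y hy

theorem squareInt_congr (hL : 0 ≤ L) (h : ∀ x ∈ Set.Icc 0 L, ∀ y ∈ Set.Icc 0 L, f x y = g x y) :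
    squareInt L f = squareInt L g :=
  intervalIntegral.integral_congr fun y hy => intervalIntegral.integral_congr fun x hx =>
    h x (Set.uIcc_of_le hL ▸ hx) y (Set.uIcc_of_le hL ▸ hy)

theorem squareInt_deriv_x {F : ℝ → ℝ → ℝ} (hf : Continuous (uncurry f))
    (h : ∀ x y, HasDerivAt (fun x => F x y) (f x y) x) :
    squareInt L f = ∫ y in (0:ℝ)..L, (F L y - F 0 y) :=
  intervalIntegral.integral_congr fun y _ =>
    intervalIntegral.integral_eq_sub_of_hasDerivAt (fun x _ => h x y)
      (Continuous.intervalIntegrable (by fun_prop) _ _)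

theorem squareInt_deriv_y {F : ℝ → ℝ → ℝ} (hf : Continuous (uncurry f))
    (h : ∀ x y, HasDerivAt (fun y => F x y) (f x y) y) :
    squareInt L f = ∫ x in (0:ℝ)..L, (F x L - F x 0) := by
  rw [squareInt, intervalIntegral_swap_of_continuous (f := fun y x => f x y) (by fun_prop)]
  exact intervalIntegral.integral_congr fun x _ =>
    intervalIntegral.integral_eq_sub_of_hasDerivAt (fun y _ => h x y)
      (Continuous.intervalIntegrable (by fun_prop) _ _)

theorem rowMass_nonneg (hL : 0 ≤ L) (f : ℝ → ℝ → ℝ) (y : ℝ) : 0 ≤ rowMass L f y :=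
  intervalIntegral.integral_nonneg hL fun _ _ => sq_nonneg _

theorem mass_nonneg (hL : 0 ≤ L) (f : ℝ → ℝ → ℝ) : 0 ≤ mass L f :=
  intervalIntegral.integral_nonneg hL fun y _ => rowMass_nonneg hL f y

theorem mass_eq_integral_rowMass (f : ℝ → ℝ → ℝ) :
    mass L f = ∫ y in (0:ℝ)..L, rowMass L f y := rfl

theorem expMass_eq_integral_rowMass (μ : ℝ) (f : ℝ → ℝ → ℝ) :
    expMass L μ f = ∫ y in (0:ℝ)..L, exp (μ * y) * rowMass L f y := by
  simp [expMass, squareInt, rowMass]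

theorem mass_le_const_mul_mass {c : ℝ} (hL : 0 ≤ L) (hf : Continuous (uncurry f))
    (hg : Continuous (uncurry g)) (h : ∀ y, rowMass L f y ≤ c * rowMass L g y) :
    mass L f ≤ c * mass L g := by
  simp only [mass_eq_integral_rowMass, ← intervalIntegral.integral_const_mul]
  exact intervalIntegral.integral_mono_on hL (Continuous.intervalIntegrable (by fun_prop) _ _)
    (Continuous.intervalIntegrable (by fun_prop) _ _) fun y _ => h y

theorem expMass_le_const_mul_expMass {c : ℝ} (μ : ℝ) (hL : 0 ≤ L) (hf : Continuous (uncurry f))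
    (hg : Continuous (uncurry g)) (h : ∀ y, rowMass L f y ≤ c * rowMass L g y) :
    expMass L μ f ≤ c * expMass L μ g := by
  simp only [expMass_eq_integral_rowMass, ← intervalIntegral.integral_const_mul]
  refine intervalIntegral.integral_mono_on hL (Continuous.intervalIntegrable (by fun_prop) _ _)
    (Continuous.intervalIntegrable (by fun_prop) _ _) fun y _ => ?_
  calc exp (μ * y) * rowMass L f y ≤ exp (μ * y) * (c * rowMass L g y) := by gcongr; exact h y
    _ = c * (exp (μ * y) * rowMass L g y) := by ring

theorem mass_le_expMass {μ : ℝ} (hL : 0 ≤ L) (hμ : 0 ≤ μ) (hf : Continuous (uncurry f)) :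
    mass L f ≤ expMass L μ f :=
  squareInt_mono hL (by fun_prop) (by fun_prop) fun _ _ _ hy =>
    le_mul_of_one_le_left (sq_nonneg _) (one_le_exp (mul_nonneg hμ hy.1))

theorem expMass_le_mass {μ : ℝ} (hL : 0 ≤ L) (hμ : 0 ≤ μ) (hf : Continuous (uncurry f)) :
    expMass L μ f ≤ exp (μ * L) * mass L f := by
  rw [mass, ← squareInt_const_mul]
  refine squareInt_mono hL (by fun_prop) (by fun_prop) fun x _ y hy => ?_
  gcongr
  exact hy.2

theorem two_mul_squareInt_mul_le {ε : ℝ} (hL : 0 ≤ L) (hε : 0 < ε) (hf : Continuous (uncurry f))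
    (hg : Continuous (uncurry g)) :
    2 * squareInt L (fun x y => f x y * g x y) ≤ ε * mass L f + ε⁻¹ * mass L g := by
  rw [mass, mass, ← squareInt_const_mul, ← squareInt_const_mul, ← squareInt_const_mul,
    ← squareInt_add (by fun_prop) (by fun_prop)]
  refine squareInt_mono hL (by fun_prop) (by fun_prop) fun x _ y _ => ?_
  rw [← mul_assoc]
  exact two_mul_le_add_mul_sq hε

theorem abs_squareInt_mul_le (hL : 0 ≤ L) (hf : Continuous (uncurry f))
    (hg : Continuous (uncurry g)) :
    |squareInt L (fun x y => f x y * g x y)| ≤ (mass L f + mass L g) / 2 := by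
  have upper := two_mul_squareInt_mul_le hL one_pos hf hg
  have lower := two_mul_squareInt_mul_le hL one_pos (f := fun x y => -1 * f x y) (by fun_prop) hg
  simp only [mul_assoc (-1 : ℝ), squareInt_const_mul, mass, mul_pow] at upper lower ⊢
  rw [abs_le]
  constructor <;> linarith

end SquareIntegral

/-- The primitive of `f` in `x` vanishing at `x = 0`. -/
def primX (f : ℝ → ℝ → ℝ) (x y : ℝ) : ℝ := ∫ s in (0:ℝ)..x, f s y

/-- The function `f` minus its mean over `0 < x < L`. -/
def centerX (L : ℝ) (f : ℝ → ℝ → ℝ) (x y : ℝ) : ℝ := f x y - primX f L y / L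

/-- The derivative `h_x` of the solution `h` of `h_xx = f` with `h = 0` at `x = 0` and `x = L`. -/
def dirichletX (L : ℝ) (f : ℝ → ℝ → ℝ) : ℝ → ℝ → ℝ := centerX L (primX f)

/-- The solution `h` of `h_xx = f` with `h = 0` at `x = 0` and `x = L`. -/
def dirichlet (L : ℝ) (f : ℝ → ℝ → ℝ) : ℝ → ℝ → ℝ := primX (dirichletX L f)

section Primitives

open Function

variable {L : ℝ} {f f' : ℝ → ℝ → ℝ}

section Continuity

variable {X : Type*} [TopologicalSpace X] {a b : X → ℝ}

@[fun_prop]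
theorem continuous_primX (hf : Continuous (uncurry f)) (ha : Continuous a) (hb : Continuous b) :
    Continuous fun q => primX f (a q) (b q) := by
  have h : Continuous fun q : ℝ × ℝ => ∫ s in (0:ℝ)..q.1, f s q.2 := by fun_prop
  exact h.comp (ha.prodMk hb)

@[fun_prop]
theorem continuous_centerX (hf : Continuous (uncurry f)) (ha : Continuous a) (hb : Continuous b) :
    Continuous fun q => centerX L f (a q) (b q) := by
  unfold centerX
  fun_prop

@[fun_prop]
theorem continuous_dirichletX (hf : Continuous (uncurry f)) (ha : Continuous a)
    (hb : Continuous b) : Continuous fun q => dirichletX L f (a q) (b q) := by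
  unfold dirichletX
  fun_prop

@[fun_prop]
theorem continuous_dirichlet (hf : Continuous (uncurry f)) (ha : Continuous a)
    (hb : Continuous b) : Continuous fun q => dirichlet L f (a q) (b q) := by
  unfold dirichlet
  fun_prop

end Continuity

theorem hasDerivAt_primX (hf : Continuous (uncurry f)) (x y : ℝ) :
    HasDerivAt (fun x => primX f x y) (f x y) x := by
  have h : Continuous fun s => f s y := by fun_prop
  exact h.integral_hasStrictDerivAt 0 x |>.hasDerivAt

theorem hasDerivAt_primX_param (hf : Continuous (uncurry f)) (hf' : Continuous (uncurry f'))
    (h : ∀ x y, HasDerivAt (fun y => f x y) (f' x y) y) (x y : ℝ) :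
    HasDerivAt (fun y => primX f x y) (primX f' x y) y :=
  hasDerivAt_intervalIntegral_of_continuous (f := fun y s => f s y) (f' := fun y s => f' s y)
    (by fun_prop) (by fun_prop) (fun y s => h s y) 0 x y

theorem hasDerivAt_dirichletX (hf : Continuous (uncurry f)) (x y : ℝ) :
    HasDerivAt (fun x => dirichletX L f x y) (f x y) x :=
  (hasDerivAt_primX hf x y).sub_const _

theorem hasDerivAt_dirichletX_param (hf : Continuous (uncurry f)) (hf' : Continuous (uncurry f'))
    (h : ∀ x y, HasDerivAt (fun y => f x y) (f' x y) y) (x y : ℝ) :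
    HasDerivAt (fun y => dirichletX L f x y) (dirichletX L f' x y) y :=
  have hp := hasDerivAt_primX_param hf hf' h
  (hp x y).sub ((hasDerivAt_primX_param (by fun_prop) (by fun_prop) hp L y).div_const L)

theorem hasDerivAt_dirichlet (hf : Continuous (uncurry f)) (x y : ℝ) :
    HasDerivAt (fun x => dirichlet L f x y) (dirichletX L f x y) x :=
  hasDerivAt_primX (by fun_prop) x y

theorem hasDerivAt_dirichlet_param (hf : Continuous (uncurry f)) (hf' : Continuous (uncurry f'))
    (h : ∀ x y, HasDerivAt (fun y => f x y) (f' x y) y) (x y : ℝ) :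
    HasDerivAt (fun y => dirichlet L f x y) (dirichlet L f' x y) y :=
  hasDerivAt_primX_param (by fun_prop) (by fun_prop) (hasDerivAt_dirichletX_param hf hf' h) x y

theorem primX_left (f : ℝ → ℝ → ℝ) (y : ℝ) : primX f 0 y = 0 := by simp [primX]

theorem primX_centerX_right (hL : L ≠ 0) (hf : Continuous (uncurry f)) (y : ℝ) :
    primX (centerX L f) L y = 0 := by
  unfold primX centerX
  rw [intervalIntegral.integral_sub (Continuous.intervalIntegrable (by fun_prop) _ _)
    intervalIntegrable_const, intervalIntegral.integral_const, smul_eq_mul, sub_zero,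
    mul_div_cancel₀ _ hL]
  exact sub_self _

theorem dirichlet_left (f : ℝ → ℝ → ℝ) (y : ℝ) : dirichlet L f 0 y = 0 := primX_left _ y

theorem dirichlet_right (hL : L ≠ 0) (hf : Continuous (uncurry f)) (y : ℝ) :
    dirichlet L f L y = 0 :=
  primX_centerX_right hL (by fun_prop) y

theorem sq_primX_le (hf : Continuous (uncurry f)) {x : ℝ} (hx : x ∈ Set.Icc 0 L) (y : ℝ) :
    primX f x y ^ 2 ≤ L * rowMass L f y := by
  have hL : 0 ≤ L := hx.1.trans hx.2
  calc primX f x y ^ 2 ≤ (x - 0) * ∫ s in (0:ℝ)..x, f s y ^ 2 :=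
        sq_intervalIntegral_le (by fun_prop) hx.1
    _ ≤ L * rowMass L f y := by
      refine mul_le_mul (by linarith [hx.2]) ?_
        (intervalIntegral.integral_nonneg hx.1 fun _ _ => sq_nonneg _) hL
      exact intervalIntegral.integral_mono_interval le_rfl hx.1 hx.2
        (.of_forall fun s => sq_nonneg _) (Continuous.intervalIntegrable (by fun_prop) _ _)

theorem rowMass_primX_le (hL : 0 ≤ L) (hf : Continuous (uncurry f)) (y : ℝ) :
    rowMass L (primX f) y ≤ L ^ 2 * rowMass L f y :=
  calc rowMass L (primX f) y ≤ ∫ _ in (0:ℝ)..L, L * rowMass L f y :=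
        intervalIntegral.integral_mono_on hL (Continuous.intervalIntegrable (by fun_prop) _ _)
          intervalIntegrable_const fun _ hx => sq_primX_le hf hx y
    _ = L ^ 2 * rowMass L f y := by
      rw [intervalIntegral.integral_const, smul_eq_mul, sub_zero]; ring

theorem rowMass_centerX_le (hL : 0 < L) (hf : Continuous (uncurry f)) (y : ℝ) :
    rowMass L (centerX L f) y ≤ rowMass L f y := by
  set c := primX f L y / L with hc
  have expand : rowMass L (centerX L f) y
      = rowMass L f y - 2 * c * primX f L y + c ^ 2 * L := by
    calc rowMass L (centerX L f) y = ∫ x in (0:ℝ)..L, (f x y ^ 2 - 2 * c * f x y + c ^ 2) := by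
          refine intervalIntegral.integral_congr fun x _ => ?_
          simp only [centerX, ← hc]
          ring
      _ = _ := by
          rw [intervalIntegral.integral_add (Continuous.intervalIntegrable (by fun_prop) _ _)
            intervalIntegrable_const, intervalIntegral.integral_sub
            (Continuous.intervalIntegrable (by fun_prop) _ _)
            (Continuous.intervalIntegrable (by fun_prop) _ _),
            intervalIntegral.integral_const_mul, intervalIntegral.integral_const, smul_eq_mul,
            sub_zero, mul_comm L]
          rfl
  have mean : primX f L y = c * L := (div_mul_cancel₀ _ hL.ne').symm
  rw [expand, mean]
  nlinarith [mul_nonneg (sq_nonneg c) hL.le]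

theorem rowMass_dirichletX_le (hL : 0 < L) (hf : Continuous (uncurry f)) (y : ℝ) :
    rowMass L (dirichletX L f) y ≤ L ^ 2 * rowMass L f y :=
  (rowMass_centerX_le hL (by fun_prop) y).trans (rowMass_primX_le hL.le hf y)

theorem rowMass_dirichlet_le (hL : 0 ≤ L) (hf : Continuous (uncurry f)) (y : ℝ) :
    rowMass L (dirichlet L f) y ≤ L ^ 2 * rowMass L (dirichletX L f) y :=
  rowMass_primX_le hL (by fun_prop) y

theorem sq_dirichletX_le (hL : 0 < L) (hf : Continuous (uncurry f)) {x : ℝ}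
    (hx : x ∈ Set.Icc 0 L) (y : ℝ) : dirichletX L f x y ^ 2 ≤ 4 * L * rowMass L f y := by
  have prim := sq_primX_le hf hx y
  have mean : (primX (primX f) L y / L) ^ 2 ≤ L * rowMass L f y := by
    rw [div_pow, div_le_iff₀ (by positivity)]
    calc primX (primX f) L y ^ 2 ≤ L * rowMass L (primX f) y :=
          sq_primX_le (by fun_prop) (Set.right_mem_Icc.2 hL.le) y
      _ ≤ L * (L ^ 2 * rowMass L f y) := by gcongr; exact rowMass_primX_le hL.le hf y
      _ = L * rowMass L f y * L ^ 2 := by ring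
  unfold dirichletX centerX
  linarith [sq_nonneg (primX f x y + primX (primX f) L y / L)]

theorem sq_dirichletX_jump_le (hL : 0 < L) (hf : Continuous (uncurry f)) {α : ℝ} (hα : |α| ≤ 1)
    (y : ℝ) : (α * dirichletX L f L y - dirichletX L f 0 y) ^ 2 ≤ 16 * L * rowMass L f y := by
  have right := sq_dirichletX_le hL hf (Set.right_mem_Icc.2 hL.le) y
  have left := sq_dirichletX_le hL hf (Set.left_mem_Icc.2 hL.le) y
  set r := dirichletX L f L y
  set l := dirichletX L f 0 y
  have contract : (α * r) ^ 2 ≤ r ^ 2 := by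
    rw [mul_pow]
    exact mul_le_of_le_one_left (sq_nonneg r) ((sq_le_one_iff_abs_le_one α).2 hα)
  linarith [sq_nonneg (α * r + l)]

theorem squareInt_mul_dirichlet (hL : L ≠ 0) (hf : Continuous (uncurry f)) :
    squareInt L (fun x y => f x y * dirichlet L f x y) = -mass L (dirichletX L f) := by
  have ftc := squareInt_deriv_x (L := L) (f := fun x y =>
      f x y * dirichlet L f x y + dirichletX L f x y ^ 2)
    (F := fun x y => dirichletX L f x y * dirichlet L f x y) (by fun_prop) fun x y =>
      ((hasDerivAt_dirichletX hf x y).mul (hasDerivAt_dirichlet hf x y)).congr_deriv (by ring)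
  simp only [dirichlet_left, dirichlet_right hL hf, mul_zero, sub_zero,
    intervalIntegral.integral_zero] at ftc
  rw [squareInt_add (by fun_prop) (by fun_prop)] at ftc
  exact eq_neg_of_add_eq_zero_left ftc

theorem pxInv_eq_primX_sub (hf : Continuous (uncurry f)) (x y : ℝ) :
    pxInv L f x y = primX f x y - primX f L y := by
  have h : Continuous fun s => f s y := by fun_prop
  rw [pxInv, primX, primX, ← intervalIntegral.integral_interval_sub_left
    (h.intervalIntegrable 0 L) (h.intervalIntegrable 0 x), neg_sub]

@[fun_prop]
theorem continuous_pxInv {X : Type*} [TopologicalSpace X] {a b : X → ℝ}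
    (hf : Continuous (uncurry f)) (ha : Continuous a) (hb : Continuous b) :
    Continuous fun q => pxInv L f (a q) (b q) := by
  simp only [pxInv_eq_primX_sub hf]
  fun_prop

theorem hasDerivAt_pxInv (hf : Continuous (uncurry f)) (x y : ℝ) :
    HasDerivAt (fun x => pxInv L f x y) (f x y) x := by
  simp only [pxInv_eq_primX_sub hf]
  exact (hasDerivAt_primX hf x y).sub_const _

theorem hasDerivAt_pxInv_param (hf : Continuous (uncurry f)) (hf' : Continuous (uncurry f'))
    (h : ∀ x y, HasDerivAt (fun y => f x y) (f' x y) y) (x y : ℝ) :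
    HasDerivAt (fun y => pxInv L f x y) (pxInv L f' x y) y := by
  simp only [pxInv_eq_primX_sub hf, pxInv_eq_primX_sub hf']
  exact (hasDerivAt_primX_param hf hf' h x y).sub (hasDerivAt_primX_param hf hf' h L y)

theorem pxInv_right (f : ℝ → ℝ → ℝ) (y : ℝ) : pxInv L f L y = 0 := by simp [pxInv]

theorem centerX_pxInv (hL : L ≠ 0) (hf : Continuous (uncurry f)) :
    centerX L (pxInv L f) = dirichletX L f := by
  ext x y
  have h : primX (pxInv L f) L y = primX (primX f) L y - L * primX f L y := by
    simp only [primX, pxInv_eq_primX_sub hf]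
    rw [intervalIntegral.integral_sub (Continuous.intervalIntegrable (by fun_prop) _ _)
      intervalIntegrable_const, intervalIntegral.integral_const, sub_zero, smul_eq_mul]
  rw [centerX, h, pxInv_eq_primX_sub hf, dirichletX, centerX]
  field_simp
  ring

end Primitives

/-- A spatial profile satisfying the boundary conditions of the closed-loop system, together with
the partial derivatives entering the equation. -/
structure KPProfile (L α β : ℝ) where
  p : ℝ → ℝ → ℝ
  px : ℝ → ℝ → ℝ
  pxx : ℝ → ℝ → ℝ
  pxxx : ℝ → ℝ → ℝ
  py : ℝ → ℝ → ℝ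
  pyy : ℝ → ℝ → ℝ
  cont_p : Continuous (Function.uncurry p)
  cont_px : Continuous (Function.uncurry px)
  cont_pxxx : Continuous (Function.uncurry pxxx)
  cont_py : Continuous (Function.uncurry py)
  cont_pyy : Continuous (Function.uncurry pyy)
  hasDerivAt_p : ∀ x y, HasDerivAt (fun x => p x y) (px x y) x
  hasDerivAt_px : ∀ x y, HasDerivAt (fun x => px x y) (pxx x y) x
  hasDerivAt_pxx : ∀ x y, HasDerivAt (fun x => pxx x y) (pxxx x y) x
  hasDerivAt_p_param : ∀ x y, HasDerivAt (fun y => p x y) (py x y) y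
  hasDerivAt_py_param : ∀ x y, HasDerivAt (fun y => py x y) (pyy x y) y
  p_left : ∀ y ∈ Set.Icc 0 L, p 0 y = 0
  p_right : ∀ y ∈ Set.Icc 0 L, p L y = 0
  px_right : ∀ y ∈ Set.Icc 0 L, px L y = α * px 0 y
  py_top : ∀ x ∈ Set.Icc 0 L, py x L = β * px x L
  py_bottom : ∀ x ∈ Set.Icc 0 L, py x 0 = 0

namespace KPProfile

open Function

variable {L α β : ℝ} (P : KPProfile L α β)

/-- The function `∂ₓ⁻¹ p_y`. -/
def z : ℝ → ℝ → ℝ := pxInv L P.py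

/-- The function `∂ₓ⁻¹ p_yy`. -/
def zy : ℝ → ℝ → ℝ := pxInv L P.pyy

/-- The spatial operator `p_x + p_xxx + ∂ₓ⁻¹ p_yy` of the equation. -/
def op (x y : ℝ) : ℝ := P.px x y + P.pxxx x y + P.zy x y

/-- The squared `L²` norm of the trace of `p_x` on the side `x = 0`. -/
def slopeTrace : ℝ := ∫ y in (0:ℝ)..L, P.px 0 y ^ 2

/-- The squared `L²` norm of the trace of `p` on the side `y = L`. -/
def topTrace : ℝ := rowMass L P.p L

/-- The squared `L²` norm of the trace of `∂ₓ⁻¹ p_y` on the side `x = 0`. -/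
def fluxTrace : ℝ := ∫ y in (0:ℝ)..L, P.z 0 y ^ 2

/-- The total of all quantities controlled by the resolvent estimates: the squared norms of `p`,
of `p_x`, of `∂ₓ⁻¹ p_y` and of the dissipative boundary traces. -/
def strongMass : ℝ := mass L P.p + mass L P.px + mass L P.z + P.slopeTrace + P.topTrace

section Continuity

variable {X : Type*} [TopologicalSpace X] {a b : X → ℝ}

@[fun_prop]
theorem continuous_p (ha : Continuous a) (hb : Continuous b) :
    Continuous fun q => P.p (a q) (b q) := P.cont_p.comp (ha.prodMk hb)

@[fun_prop]
theorem continuous_px (ha : Continuous a) (hb : Continuous b) :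
    Continuous fun q => P.px (a q) (b q) := P.cont_px.comp (ha.prodMk hb)

@[fun_prop]
theorem continuous_pxxx (ha : Continuous a) (hb : Continuous b) :
    Continuous fun q => P.pxxx (a q) (b q) := P.cont_pxxx.comp (ha.prodMk hb)

@[fun_prop]
theorem continuous_py (ha : Continuous a) (hb : Continuous b) :
    Continuous fun q => P.py (a q) (b q) := P.cont_py.comp (ha.prodMk hb)

@[fun_prop]
theorem continuous_pyy (ha : Continuous a) (hb : Continuous b) :
    Continuous fun q => P.pyy (a q) (b q) := P.cont_pyy.comp (ha.prodMk hb)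

@[fun_prop]
theorem continuous_z (ha : Continuous a) (hb : Continuous b) :
    Continuous fun q => P.z (a q) (b q) := by
  unfold z
  fun_prop

@[fun_prop]
theorem continuous_zy (ha : Continuous a) (hb : Continuous b) :
    Continuous fun q => P.zy (a q) (b q) := by
  unfold zy
  fun_prop

@[fun_prop]
theorem continuous_op (ha : Continuous a) (hb : Continuous b) :
    Continuous fun q => P.op (a q) (b q) := by
  unfold op
  fun_prop

end Continuity

theorem hasDerivAt_z (x y : ℝ) : HasDerivAt (fun x => P.z x y) (P.py x y) x :=
  hasDerivAt_pxInv P.cont_py x y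

theorem hasDerivAt_z_param (x y : ℝ) : HasDerivAt (fun y => P.z x y) (P.zy x y) y :=
  hasDerivAt_pxInv_param P.cont_py P.cont_pyy P.hasDerivAt_py_param x y

theorem z_right (y : ℝ) : P.z L y = 0 := pxInv_right _ y

theorem z_bottom {x : ℝ} (hx : x ∈ Set.Icc 0 L) : P.z x 0 = 0 := by
  have vanish : ∫ s in x..L, P.py s 0 = ∫ _ in x..L, (0 : ℝ) :=
    intervalIntegral.integral_congr fun s hs => by
      rw [Set.uIcc_of_le hx.2] at hs
      exact P.py_bottom s ⟨hx.1.trans hs.1, hs.2⟩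
  rw [z, pxInv, vanish, intervalIntegral.integral_zero, neg_zero]

theorem z_top {x : ℝ} (hx : x ∈ Set.Icc 0 L) : P.z x L = β * P.p x L := by
  have feedback : ∫ s in x..L, P.py s L = ∫ s in x..L, β * P.px s L :=
    intervalIntegral.integral_congr fun s hs => by
      rw [Set.uIcc_of_le hx.2] at hs
      exact P.py_top s ⟨hx.1.trans hs.1, hs.2⟩
  have ftc : ∫ s in x..L, P.px s L = P.p L L - P.p x L :=
    intervalIntegral.integral_eq_sub_of_hasDerivAt (fun s _ => P.hasDerivAt_p s L)
      (Continuous.intervalIntegrable (by fun_prop) _ _)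
  rw [z, pxInv, feedback, intervalIntegral.integral_const_mul, ftc,
    P.p_right L (Set.right_mem_Icc.2 (hx.1.trans hx.2))]
  ring

theorem slopeTrace_nonneg (hL : 0 ≤ L) : 0 ≤ P.slopeTrace :=
  intervalIntegral.integral_nonneg hL fun _ _ => sq_nonneg _

theorem topTrace_nonneg (hL : 0 ≤ L) : 0 ≤ P.topTrace := rowMass_nonneg hL _ _

theorem fluxTrace_nonneg (hL : 0 ≤ L) : 0 ≤ P.fluxTrace :=
  intervalIntegral.integral_nonneg hL fun _ _ => sq_nonneg _

theorem le_strongMass (hL : 0 ≤ L) : mass L P.p ≤ P.strongMass ∧ mass L P.px ≤ P.strongMass ∧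
    mass L P.z ≤ P.strongMass ∧ P.slopeTrace ≤ P.strongMass ∧ P.topTrace ≤ P.strongMass := by
  have := mass_nonneg hL P.p
  have := mass_nonneg hL P.px
  have := mass_nonneg hL P.z
  have := P.slopeTrace_nonneg hL
  have := P.topTrace_nonneg hL
  unfold strongMass
  refine ⟨?_, ?_, ?_, ?_, ?_⟩ <;> linarith

theorem squareInt_dispersion_mul_affine (hL : 0 ≤ L) (a b : ℝ) :
    squareInt L (fun x y => (P.px x y + P.pxxx x y) * ((a + b * x) * P.p x y))
      = 3 / 2 * b * mass L P.px - b / 2 * mass L P.p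
        + (a - (a + b * L) * α ^ 2) / 2 * P.slopeTrace := by
  have ftc := squareInt_deriv_x (L := L)
    (F := fun x y => (a + b * x) * (P.p x y ^ 2 / 2 + P.p x y * P.pxx x y - P.px x y ^ 2 / 2)
      - b * (P.p x y * P.px x y))
    (f := fun x y => (P.px x y + P.pxxx x y) * ((a + b * x) * P.p x y)
      + (b / 2 * P.p x y ^ 2 - 3 / 2 * b * P.px x y ^ 2)) (by fun_prop) fun x y => by
      have hw := hasDerivAt_const_add_const_mul a b x
      have hp := P.hasDerivAt_p x y
      have hpx := P.hasDerivAt_px x y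
      refine ((hw.mul ((((hp.pow 2).div_const 2).add (hp.mul (P.hasDerivAt_pxx x y))).sub
        ((hpx.pow 2).div_const 2))).sub ((hp.mul hpx).const_mul b)).congr_deriv ?_
      simp only [Pi.pow_apply, Pi.sub_apply, Pi.add_apply, Pi.mul_apply, Nat.cast_ofNat,
        Nat.add_one_sub_one, pow_one]
      ring
  rw [squareInt_add (by fun_prop) (by fun_prop), squareInt_sub (by fun_prop) (by fun_prop),
    squareInt_const_mul, squareInt_const_mul] at ftc
  change _ + (b / 2 * mass L P.p - 3 / 2 * b * mass L P.px) = _ at ftc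
  have boundary : ∀ y ∈ Set.uIcc 0 L,
      ((a + b * L) * (P.p L y ^ 2 / 2 + P.p L y * P.pxx L y - P.px L y ^ 2 / 2)
        - b * (P.p L y * P.px L y))
      - ((a + b * 0) * (P.p 0 y ^ 2 / 2 + P.p 0 y * P.pxx 0 y - P.px 0 y ^ 2 / 2)
        - b * (P.p 0 y * P.px 0 y)) = (a - (a + b * L) * α ^ 2) / 2 * P.px 0 y ^ 2 := by
    intro y hy
    rw [Set.uIcc_of_le hL] at hy
    rw [P.p_left y hy, P.p_right y hy, P.px_right y hy]
    ring
  rw [eq_sub_of_add_eq ftc, intervalIntegral.integral_congr boundary,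
    intervalIntegral.integral_const_mul, slopeTrace]
  ring

theorem squareInt_zy_mul_affine (hL : 0 ≤ L) (a b : ℝ) :
    squareInt L (fun x y => P.zy x y * ((a + b * x) * P.p x y))
      = b / 2 * mass L P.z + a / 2 * P.fluxTrace
        + β * ∫ x in (0:ℝ)..L, (a + b * x) * P.p x L ^ 2 := by
  have ftc_x := squareInt_deriv_x (L := L) (F := fun x y => (a + b * x) * (P.z x y ^ 2 / 2))
    (f := fun x y => b / 2 * P.z x y ^ 2 + (a + b * x) * (P.z x y * P.py x y))
    (by fun_prop) fun x y => by
      have hw := hasDerivAt_const_add_const_mul a b x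
      refine (hw.mul (((P.hasDerivAt_z x y).pow 2).div_const 2)).congr_deriv ?_
      simp only [Pi.pow_apply, Nat.cast_ofNat, Nat.add_one_sub_one, pow_one]
      ring
  have ftc_y := squareInt_deriv_y (L := L) (F := fun x y => (a + b * x) * (P.p x y * P.z x y))
    (f := fun x y => P.zy x y * ((a + b * x) * P.p x y) + (a + b * x) * (P.z x y * P.py x y))
    (by fun_prop) fun x y => by
      refine (((P.hasDerivAt_p_param x y).mul (P.hasDerivAt_z_param x y)).const_mul
        (a + b * x)).congr_deriv ?_
      ring
  have side : ∫ y in (0:ℝ)..L, ((a + b * L) * (P.z L y ^ 2 / 2)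
      - (a + b * 0) * (P.z 0 y ^ 2 / 2)) = -(a / 2) * P.fluxTrace := by
    rw [fluxTrace, ← intervalIntegral.integral_const_mul]
    refine intervalIntegral.integral_congr fun y _ => ?_
    simp only [P.z_right]
    ring
  have ends : ∫ x in (0:ℝ)..L, ((a + b * x) * (P.p x L * P.z x L)
      - (a + b * x) * (P.p x 0 * P.z x 0)) = β * ∫ x in (0:ℝ)..L, (a + b * x) * P.p x L ^ 2 := by
    rw [← intervalIntegral.integral_const_mul]
    refine intervalIntegral.integral_congr fun x hx => ?_
    rw [Set.uIcc_of_le hL] at hx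
    simp only [P.z_top hx, P.z_bottom hx]
    ring
  rw [squareInt_add (by fun_prop) (by fun_prop)] at ftc_x ftc_y
  rw [squareInt_const_mul, side] at ftc_x
  rw [ends] at ftc_y
  change b / 2 * mass L P.z + _ = _ at ftc_x
  linarith

theorem squareInt_op_mul_affine (hL : 0 ≤ L) (a b : ℝ) :
    squareInt L (fun x y => P.op x y * ((a + b * x) * P.p x y))
      = 3 / 2 * b * mass L P.px - b / 2 * mass L P.p + b / 2 * mass L P.z
        + (a - (a + b * L) * α ^ 2) / 2 * P.slopeTrace + a / 2 * P.fluxTrace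
        + β * ∫ x in (0:ℝ)..L, (a + b * x) * P.p x L ^ 2 := by
  simp only [op, add_mul (P.px _ _ + P.pxxx _ _)]
  rw [squareInt_add (by fun_prop) (by fun_prop), P.squareInt_dispersion_mul_affine hL,
    P.squareInt_zy_mul_affine hL]
  ring

theorem squareInt_op_mul_self (hL : 0 ≤ L) :
    squareInt L (fun x y => P.op x y * P.p x y)
      = (1 - α ^ 2) / 2 * P.slopeTrace + 1 / 2 * P.fluxTrace + β * P.topTrace := by
  have h := P.squareInt_op_mul_affine hL 1 0
  simp only [zero_mul, add_zero, one_mul] at h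
  rw [h, topTrace, rowMass]
  ring

theorem le_squareInt_op_mul_x (hL : 0 ≤ L) (hβ : 0 ≤ β) :
    3 * mass L P.px + mass L P.z ≤ 2 * squareInt L (fun x y => P.op x y * (x * P.p x y))
      + mass L P.p + L * α ^ 2 * P.slopeTrace := by
  have h := P.squareInt_op_mul_affine hL 0 1
  simp only [zero_add, one_mul, zero_div, zero_mul] at h
  have top : 0 ≤ β * ∫ x in (0:ℝ)..L, x * P.p x L ^ 2 :=
    mul_nonneg hβ (intervalIntegral.integral_nonneg hL fun x hx => mul_nonneg hx.1 (sq_nonneg _))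
  linarith

/-- With `S_xx = z`, the `x`-flux in the energy balance of the plate equation for `p`. -/
def plateFlux (x y : ℝ) : ℝ :=
  P.p x y * dirichlet L P.z x y + P.pxx x y * dirichlet L P.z x y
    - P.px x y * dirichletX L P.z x y + P.p x y * P.z x y
    + dirichletX L P.zy x y * dirichlet L P.z x y

theorem hasDerivAt_plateFlux (x y : ℝ) :
    HasDerivAt (fun x => P.plateFlux x y)
      (P.op x y * dirichlet L P.z x y + P.p x y * dirichletX L P.z x y
        + (P.p x y * P.py x y + dirichletX L P.z x y * dirichletX L P.zy x y)) x := by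
  have hp := P.hasDerivAt_p x y
  have hS := hasDerivAt_dirichlet (L := L) (f := P.z) (by fun_prop) x y
  have hB := hasDerivAt_dirichletX (L := L) (f := P.z) (by fun_prop) x y
  have hBy := hasDerivAt_dirichletX (L := L) (f := P.zy) (by fun_prop) x y
  refine (((((hp.mul hS).add ((P.hasDerivAt_pxx x y).mul hS)).sub
    ((P.hasDerivAt_px x y).mul hB)).add (hp.mul (P.hasDerivAt_z x y))).add
    (hBy.mul hS)).congr_deriv ?_
  simp only [op]
  ring

theorem hasDerivAt_exp_mul_plateEnergy (μ x y : ℝ) :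
    HasDerivAt (fun y => exp (μ * y) * (P.p x y ^ 2 + dirichletX L P.z x y ^ 2))
      (μ * (exp (μ * y) * P.p x y ^ 2 + exp (μ * y) * dirichletX L P.z x y ^ 2)
        + exp (μ * y) * 2 * (P.p x y * P.py x y + dirichletX L P.z x y * dirichletX L P.zy x y))
      y := by
  have hexp : HasDerivAt (fun y => exp (μ * y)) (exp (μ * y) * μ) y := by
    simpa using ((hasDerivAt_id y).const_mul μ).exp
  have hB := hasDerivAt_dirichletX_param (L := L) (f := P.z) (f' := P.zy) (by fun_prop)
    (by fun_prop) P.hasDerivAt_z_param x y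
  refine (hexp.mul (((P.hasDerivAt_p_param x y).pow 2).add (hB.pow 2))).congr_deriv ?_
  simp only [Pi.add_apply, Pi.pow_apply, Nat.cast_ofNat, Nat.add_one_sub_one, pow_one]
  ring

theorem plateFlux_right_sub_left (hL : 0 < L) {y : ℝ} (hy : y ∈ Set.Icc 0 L) :
    P.plateFlux L y - P.plateFlux 0 y
      = P.px 0 y * (dirichletX L P.z 0 y - α * dirichletX L P.z L y) := by
  simp only [plateFlux, P.p_left y hy, P.p_right y hy, P.px_right y hy, dirichlet_left,
    dirichlet_right hL.ne' (f := P.z) (by fun_prop)]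
  ring

/- The equation reads `p_y = z_x`, `z_y = op - p_x - p_xxx`, a plate equation evolving in `y`
whose energy density is `p² + B²` with `B_x = z`. -/
theorem plate_identity (hL : 0 < L) (μ : ℝ) :
    μ * (expMass L μ P.p + expMass L μ (dirichletX L P.z))
      = squareInt L (fun x y => exp (μ * y) * 2 * (P.op x y * dirichlet L P.z x y
          + P.p x y * dirichletX L P.z x y))
        + (∫ y in (0:ℝ)..L, exp (μ * y) * 2 *
          (P.px 0 y * (α * dirichletX L P.z L y - dirichletX L P.z 0 y)))
        + ∫ x in (0:ℝ)..L, (exp (μ * L) * (P.p x L ^ 2 + dirichletX L P.z x L ^ 2)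
          - exp (μ * 0) * (P.p x 0 ^ 2 + dirichletX L P.z x 0 ^ 2)) := by
  have lateral : ∀ y ∈ Set.uIcc 0 L,
      exp (μ * y) * 2 * P.plateFlux L y - exp (μ * y) * 2 * P.plateFlux 0 y
        = -1 * (exp (μ * y) * 2 *
          (P.px 0 y * (α * dirichletX L P.z L y - dirichletX L P.z 0 y))) := by
    intro y hy
    rw [Set.uIcc_of_le hL.le] at hy
    rw [← mul_sub, P.plateFlux_right_sub_left hL hy]
    ring
  have flux := squareInt_deriv_x (L := L) (by fun_prop) fun x y =>
    (P.hasDerivAt_plateFlux x y).const_mul (exp (μ * y) * 2)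
  have balance := squareInt_deriv_y (L := L) (by fun_prop) (P.hasDerivAt_exp_mul_plateEnergy μ)
  rw [intervalIntegral.integral_congr lateral, intervalIntegral.integral_const_mul] at flux
  simp only [mul_add (exp _ * 2) (_ + _)] at flux
  rw [squareInt_add (by fun_prop) (by fun_prop)] at flux balance
  rw [squareInt_const_mul, squareInt_add (by fun_prop) (by fun_prop)] at balance
  rw [expMass, expMass]
  linarith

theorem two_mul_squareInt_exp_le (hL : 0 < L) (μ : ℝ) :
    squareInt L (fun x y => exp (μ * y) * 2 * (P.op x y * dirichlet L P.z x y
          + P.p x y * dirichletX L P.z x y))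
      ≤ expMass L μ P.op + expMass L μ P.p + (1 + L ^ 2) * expMass L μ (dirichletX L P.z) := by
  have potential : expMass L μ (dirichlet L P.z) ≤ L ^ 2 * expMass L μ (dirichletX L P.z) :=
    expMass_le_const_mul_expMass μ hL.le (by fun_prop) (by fun_prop)
      (rowMass_dirichlet_le hL.le (by fun_prop))
  have young : squareInt L (fun x y => exp (μ * y) * 2 * (P.op x y * dirichlet L P.z x y
        + P.p x y * dirichletX L P.z x y))
      ≤ squareInt L fun x y => (exp (μ * y) * P.op x y ^ 2 + exp (μ * y) * P.p x y ^ 2)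
        + (exp (μ * y) * dirichlet L P.z x y ^ 2 + exp (μ * y) * dirichletX L P.z x y ^ 2) := by
    refine squareInt_mono hL.le (by fun_prop) (by fun_prop) fun x _ y _ => ?_
    rw [mul_assoc, ← mul_add, ← mul_add, ← mul_add]
    gcongr
    linarith [two_mul_le_add_sq (P.op x y) (dirichlet L P.z x y),
      two_mul_le_add_sq (P.p x y) (dirichletX L P.z x y)]
  rw [squareInt_add (by fun_prop) (by fun_prop), squareInt_add (by fun_prop) (by fun_prop),
    squareInt_add (by fun_prop) (by fun_prop)] at young
  change _ ≤ expMass L μ P.op + expMass L μ P.p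
    + (expMass L μ (dirichlet L P.z) + expMass L μ (dirichletX L P.z)) at young
  linarith

theorem plate_lateral_le (hL : 0 < L) (hα : |α| ≤ 1) {μ K : ℝ} (hμ : 0 ≤ μ) (hK : 0 < K) :
    ∫ y in (0:ℝ)..L, exp (μ * y) * 2 *
        (P.px 0 y * (α * dirichletX L P.z L y - dirichletX L P.z 0 y))
      ≤ exp (μ * L) * (K * P.slopeTrace + 16 * L / K * mass L P.z) := by
  have pointwise : ∀ y ∈ Set.Icc 0 L, exp (μ * y) * 2 *
      (P.px 0 y * (α * dirichletX L P.z L y - dirichletX L P.z 0 y))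
      ≤ exp (μ * L) * (K * P.px 0 y ^ 2 + 16 * L / K * rowMass L P.z y) := by
    intro y hy
    set jump := α * dirichletX L P.z L y - dirichletX L P.z 0 y
    have hjump : jump ^ 2 ≤ 16 * L * rowMass L P.z y :=
      sq_dirichletX_jump_le hL (by fun_prop) hα y
    have young : 2 * (P.px 0 y * jump)
        ≤ K * P.px 0 y ^ 2 + 16 * L / K * rowMass L P.z y :=
      calc 2 * (P.px 0 y * jump) ≤ K * P.px 0 y ^ 2 + K⁻¹ * jump ^ 2 := by
            rw [← mul_assoc]
            exact two_mul_le_add_mul_sq hK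
        _ ≤ K * P.px 0 y ^ 2 + K⁻¹ * (16 * L * rowMass L P.z y) := by gcongr
        _ = _ := by ring
    have hz := rowMass_nonneg hL.le P.z y
    rw [mul_assoc]
    calc exp (μ * y) * (2 * (P.px 0 y * jump))
        ≤ exp (μ * y) * (K * P.px 0 y ^ 2 + 16 * L / K * rowMass L P.z y) := by gcongr
      _ ≤ _ := by gcongr; exact hy.2
  refine (intervalIntegral.integral_mono_on hL.le (Continuous.intervalIntegrable (by fun_prop) _ _)
    (Continuous.intervalIntegrable (by fun_prop) _ _) pointwise).trans_eq ?_
  rw [intervalIntegral.integral_const_mul, intervalIntegral.integral_add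
    (Continuous.intervalIntegrable (by fun_prop) _ _)
    (Continuous.intervalIntegrable (by fun_prop) _ _), intervalIntegral.integral_const_mul,
    intervalIntegral.integral_const_mul, slopeTrace, mass_eq_integral_rowMass]

theorem plate_ends_le (hL : 0 < L) (μ : ℝ) :
    ∫ x in (0:ℝ)..L, (exp (μ * L) * (P.p x L ^ 2 + dirichletX L P.z x L ^ 2)
        - exp (μ * 0) * (P.p x 0 ^ 2 + dirichletX L P.z x 0 ^ 2))
      ≤ exp (μ * L) * ((1 + L ^ 2 * β ^ 2) * P.topTrace) := by
  have feedback : rowMass L P.z L = β ^ 2 * P.topTrace := by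
    rw [topTrace, rowMass, rowMass, ← intervalIntegral.integral_const_mul]
    refine intervalIntegral.integral_congr fun x hx => ?_
    simp only [P.z_top (Set.uIcc_of_le hL.le ▸ hx), mul_pow]
  have potential := rowMass_dirichletX_le hL (f := P.z) (by fun_prop) L
  calc _ ≤ ∫ x in (0:ℝ)..L, exp (μ * L) * (P.p x L ^ 2 + dirichletX L P.z x L ^ 2) :=
        intervalIntegral.integral_mono_on hL.le (Continuous.intervalIntegrable (by fun_prop) _ _)
          (Continuous.intervalIntegrable (by fun_prop) _ _) fun x _ =>
            sub_le_self _ (by positivity)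
    _ = exp (μ * L) * (P.topTrace + rowMass L (dirichletX L P.z) L) := by
      rw [intervalIntegral.integral_const_mul, intervalIntegral.integral_add
        (Continuous.intervalIntegrable (by fun_prop) _ _)
        (Continuous.intervalIntegrable (by fun_prop) _ _)]
      rfl
    _ ≤ _ := by
      gcongr
      rw [feedback] at potential
      linarith

theorem plate_estimate (hL : 0 < L) (hα : |α| ≤ 1) {μ K : ℝ} (hμ : 1 + L ^ 2 ≤ μ) (hK : 0 < K) :
    (μ - 1) * expMass L μ P.p ≤ expMass L μ P.op
      + exp (μ * L) * (K * P.slopeTrace + 16 * L / K * mass L P.z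
        + (1 + L ^ 2 * β ^ 2) * P.topTrace) := by
  have hμ₀ : 0 ≤ μ := le_trans (by positivity) hμ
  have absorb : 0 ≤ (μ - (1 + L ^ 2)) * expMass L μ (dirichletX L P.z) :=
    mul_nonneg (sub_nonneg.2 hμ) <| intervalIntegral.integral_nonneg hL.le fun y _ =>
      intervalIntegral.integral_nonneg hL.le fun x _ => by positivity
  linarith [P.plate_identity hL μ, P.two_mul_squareInt_exp_le hL μ,
    P.plate_lateral_le hL hα hμ₀ hK, P.plate_ends_le hL μ]

variable (Q : KPProfile L α β)

theorem mass_eq_neg_squareInt_dirichletX_mul (hL : 0 ≤ L) :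
    mass L P.p = -squareInt L (fun x y => dirichletX L P.p x y * P.px x y) := by
  have ftc := squareInt_deriv_x (L := L) (f := fun x y =>
      P.p x y ^ 2 + dirichletX L P.p x y * P.px x y)
    (F := fun x y => dirichletX L P.p x y * P.p x y) (by fun_prop) fun x y =>
      ((hasDerivAt_dirichletX P.cont_p x y).mul (P.hasDerivAt_p x y)).congr_deriv (by ring)
  have boundary : ∀ y ∈ Set.uIcc 0 L,
      dirichletX L P.p L y * P.p L y - dirichletX L P.p 0 y * P.p 0 y = 0 := fun y hy => by
    rw [Set.uIcc_of_le hL] at hy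
    rw [P.p_left y hy, P.p_right y hy, mul_zero, mul_zero, sub_zero]
  rw [intervalIntegral.integral_congr boundary, intervalIntegral.integral_zero,
    squareInt_add (by fun_prop) (by fun_prop)] at ftc
  exact eq_neg_of_add_eq_zero_left ftc

theorem mass_le_interpolation (hL : 0 ≤ L) {K : ℝ} (hK : 0 < K) :
    2 * mass L P.p ≤ K * mass L (dirichletX L P.p) + K⁻¹ * mass L P.px := by
  have young := two_mul_squareInt_mul_le hL hK (f := fun x y => -1 * dirichletX L P.p x y)
    (by fun_prop) P.cont_px
  simp only [mul_assoc (-1 : ℝ), squareInt_const_mul, mass, mul_pow] at young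
  rw [P.mass_eq_neg_squareInt_dirichletX_mul hL]
  unfold mass
  linarith

theorem squareInt_dispersion_mul_dirichlet (hL : 0 < L) :
    squareInt L (fun x y => (P.px x y + P.pxxx x y) * dirichlet L Q.p x y)
      = squareInt L (fun x y => P.px x y * Q.p x y)
        - squareInt L (fun x y => P.p x y * dirichletX L Q.p x y)
        - ∫ y in (0:ℝ)..L, P.px 0 y * (α * dirichletX L Q.p L y - dirichletX L Q.p 0 y) := by
  have h_x := hasDerivAt_dirichlet (L := L) Q.cont_p
  have h_xx := hasDerivAt_dirichletX (L := L) Q.cont_p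
  have ftc := squareInt_deriv_x (L := L)
    (F := fun x y => P.pxx x y * dirichlet L Q.p x y - P.px x y * dirichletX L Q.p x y
      + P.p x y * dirichlet L Q.p x y)
    (f := fun x y => (P.px x y + P.pxxx x y) * dirichlet L Q.p x y
      + (P.p x y * dirichletX L Q.p x y - P.px x y * Q.p x y)) (by fun_prop) fun x y => by
      refine ((((P.hasDerivAt_pxx x y).mul (h_x x y)).sub
        ((P.hasDerivAt_px x y).mul (h_xx x y))).add
        ((P.hasDerivAt_p x y).mul (h_x x y))).congr_deriv ?_
      ring
  have lateral : ∀ y ∈ Set.uIcc 0 L,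
      (P.pxx L y * dirichlet L Q.p L y - P.px L y * dirichletX L Q.p L y
        + P.p L y * dirichlet L Q.p L y)
      - (P.pxx 0 y * dirichlet L Q.p 0 y - P.px 0 y * dirichletX L Q.p 0 y
        + P.p 0 y * dirichlet L Q.p 0 y)
      = -1 * (P.px 0 y * (α * dirichletX L Q.p L y - dirichletX L Q.p 0 y)) := fun y hy => by
    rw [P.px_right y (Set.uIcc_of_le hL.le ▸ hy), dirichlet_left,
      dirichlet_right hL.ne' Q.cont_p]
    ring
  rw [intervalIntegral.integral_congr lateral, intervalIntegral.integral_const_mul,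
    squareInt_add (by fun_prop) (by fun_prop), squareInt_sub (by fun_prop) (by fun_prop)] at ftc
  linarith

theorem squareInt_zy_mul_dirichlet (hL : 0 ≤ L) :
    squareInt L (fun x y => P.zy x y * dirichlet L Q.p x y)
      = β * (∫ x in (0:ℝ)..L, P.p x L * dirichlet L Q.p x L)
        - squareInt L (fun x y => P.z x y * dirichlet L Q.py x y) := by
  have h_y := hasDerivAt_dirichlet_param (L := L) Q.cont_p Q.cont_py Q.hasDerivAt_p_param
  have ftc := squareInt_deriv_y (L := L) (F := fun x y => P.z x y * dirichlet L Q.p x y)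
    (f := fun x y => P.zy x y * dirichlet L Q.p x y + P.z x y * dirichlet L Q.py x y)
    (by fun_prop) fun x y => (P.hasDerivAt_z_param x y).mul (h_y x y)
  have ends : ∀ x ∈ Set.uIcc 0 L, P.z x L * dirichlet L Q.p x L - P.z x 0 * dirichlet L Q.p x 0
      = β * (P.p x L * dirichlet L Q.p x L) := fun x hx => by
    rw [P.z_top (Set.uIcc_of_le hL ▸ hx), P.z_bottom (Set.uIcc_of_le hL ▸ hx)]
    ring
  rw [intervalIntegral.integral_congr ends, intervalIntegral.integral_const_mul,
    squareInt_add (by fun_prop) (by fun_prop)] at ftc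
  exact eq_sub_of_add_eq ftc

theorem squareInt_op_mul_dirichlet (hL : 0 < L) :
    squareInt L (fun x y => P.op x y * dirichlet L Q.p x y)
      = squareInt L (fun x y => P.px x y * Q.p x y)
        - squareInt L (fun x y => P.p x y * dirichletX L Q.p x y)
        - squareInt L (fun x y => P.z x y * dirichlet L Q.py x y)
        - (∫ y in (0:ℝ)..L, P.px 0 y * (α * dirichletX L Q.p L y - dirichletX L Q.p 0 y))
        + β * ∫ x in (0:ℝ)..L, P.p x L * dirichlet L Q.p x L := by
  simp only [op, add_mul (P.px _ _ + P.pxxx _ _)]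
  rw [squareInt_add (by fun_prop) (by fun_prop), P.squareInt_dispersion_mul_dirichlet Q hL,
    P.squareInt_zy_mul_dirichlet Q hL.le]
  ring

theorem mass_dirichlet_py_le (hL : 0 < L) : mass L (dirichlet L P.py) ≤ L ^ 2 * mass L P.z :=
  mass_le_const_mul_mass hL.le (by fun_prop) (by fun_prop) fun y => by
    refine (rowMass_dirichlet_le hL.le P.cont_py y).trans ?_
    rw [← centerX_pxInv hL.ne' P.cont_py]
    gcongr
    exact rowMass_centerX_le hL (by fun_prop) y

theorem abs_lateral_le (hL : 0 < L) (hα : |α| ≤ 1) :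
    |∫ y in (0:ℝ)..L, P.px 0 y * (α * dirichletX L Q.p L y - dirichletX L Q.p 0 y)|
      ≤ (P.slopeTrace + 16 * L * mass L Q.p) / 2 := by
  refine (abs_intervalIntegral_mul_le (by fun_prop) (by fun_prop) hL.le).trans ?_
  rw [slopeTrace, mass_eq_integral_rowMass, ← intervalIntegral.integral_const_mul]
  gcongr
  exact intervalIntegral.integral_mono_on hL.le (Continuous.intervalIntegrable (by fun_prop) _ _)
    (Continuous.intervalIntegrable (by fun_prop) _ _) fun y _ =>
      sq_dirichletX_jump_le hL Q.cont_p hα y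

theorem abs_top_le (hL : 0 < L) :
    |∫ x in (0:ℝ)..L, P.p x L * dirichlet L Q.p x L|
      ≤ (P.topTrace + L ^ 4 * Q.topTrace) / 2 := by
  refine (abs_intervalIntegral_mul_le (by fun_prop) (by fun_prop) hL.le).trans ?_
  have potential : rowMass L (dirichlet L Q.p) L ≤ L ^ 4 * Q.topTrace :=
    calc rowMass L (dirichlet L Q.p) L ≤ L ^ 2 * rowMass L (dirichletX L Q.p) L :=
          rowMass_dirichlet_le hL.le Q.cont_p L
      _ ≤ L ^ 2 * (L ^ 2 * Q.topTrace) := by gcongr; exact rowMass_dirichletX_le hL Q.cont_p L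
      _ = L ^ 4 * Q.topTrace := by ring
  exact div_le_div_of_nonneg_right (add_le_add_right potential _) two_pos.le

theorem abs_squareInt_op_mul_dirichlet_le (hL : 0 < L) (hα : |α| ≤ 1) (hβ : 0 ≤ β) :
    |squareInt L (fun x y => P.op x y * dirichlet L Q.p x y)|
      ≤ (2 + 8 * L + L ^ 2 + β * (1 + L ^ 4)) * (P.strongMass + Q.strongMass) := by
  have transport := abs_squareInt_mul_le hL.le P.cont_px Q.cont_p
  have potential := abs_squareInt_mul_le hL.le P.cont_p (g := dirichletX L Q.p) (by fun_prop)
  have transverse := abs_squareInt_mul_le hL.le (f := P.z) (g := dirichlet L Q.py)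
    (by fun_prop) (by fun_prop)
  have hqx : mass L (dirichletX L Q.p) ≤ L ^ 2 * mass L Q.p :=
    mass_le_const_mul_mass hL.le (by fun_prop) Q.cont_p (rowMass_dirichletX_le hL Q.cont_p)
  have hqy := Q.mass_dirichlet_py_le hL
  have lateral := P.abs_lateral_le Q hL hα
  have top : |β * ∫ x in (0:ℝ)..L, P.p x L * dirichlet L Q.p x L|
      ≤ β * ((P.topTrace + L ^ 4 * Q.topTrace) / 2) := by
    rw [abs_mul, abs_of_nonneg hβ]
    gcongr
    exact P.abs_top_le Q hL
  obtain ⟨p_le, px_le, z_le, slope_le, top_le⟩ := P.le_strongMass hL.le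
  obtain ⟨q_le, -, w_le, -, topQ_le⟩ := Q.le_strongMass hL.le
  have hP : 0 ≤ P.strongMass := (mass_nonneg hL.le _).trans p_le
  have hQ : 0 ≤ Q.strongMass := (mass_nonneg hL.le _).trans q_le
  rw [P.squareInt_op_mul_dirichlet Q hL]
  calc _ ≤ (mass L P.px + mass L Q.p) / 2 + (mass L P.p + L ^ 2 * mass L Q.p) / 2
        + (mass L P.z + L ^ 2 * mass L Q.z) / 2 + (P.slopeTrace + 16 * L * mass L Q.p) / 2
        + β * ((P.topTrace + L ^ 4 * Q.topTrace) / 2) := by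
        refine (abs_add_le _ _).trans (add_le_add ?_ top)
        refine (abs_sub _ _).trans (add_le_add ?_ lateral)
        refine (abs_sub _ _).trans (add_le_add ?_ (by linarith))
        exact (abs_sub _ _).trans (add_le_add transport (by linarith))
    _ ≤ (P.strongMass + Q.strongMass) / 2 + (P.strongMass + L ^ 2 * Q.strongMass) / 2
        + (P.strongMass + L ^ 2 * Q.strongMass) / 2 + (P.strongMass + 16 * L * Q.strongMass) / 2
        + β * ((P.strongMass + L ^ 4 * Q.strongMass) / 2) := by gcongr
    _ ≤ _ := by
      have hP' : 0 ≤ (8 * L + L ^ 2 + β * (1 / 2 + L ^ 4)) * P.strongMass := by positivity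
      have hQ' : 0 ≤ (3 / 2 + β * (1 + L ^ 4 / 2)) * Q.strongMass := by positivity
      linarith

variable {s : ℝ} {g : ℝ → ℝ → ℝ}

theorem expMass_op_le {μ : ℝ} (hL : 0 ≤ L) (hg : Continuous (uncurry g))
    (h : ∀ x ∈ Set.Icc 0 L, ∀ y ∈ Set.Icc 0 L, P.op x y = g x y + s * Q.p x y) :
    expMass L μ P.op ≤ 2 * expMass L μ g + 2 * s ^ 2 * expMass L μ Q.p := by
  unfold expMass
  rw [← squareInt_const_mul, ← squareInt_const_mul, ← squareInt_add (by fun_prop) (by fun_prop)]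
  refine squareInt_mono hL (by fun_prop) (by fun_prop) fun x hx y hy => ?_
  rw [h x hx y hy]
  calc exp (μ * y) * (g x y + s * Q.p x y) ^ 2
      ≤ exp (μ * y) * (2 * (g x y ^ 2 + (s * Q.p x y) ^ 2)) := by gcongr; exact add_sq_le
    _ = _ := by ring

theorem abs_mul_mass_dirichletX_le (hL : 0 < L) (hα : |α| ≤ 1) (hβ : 0 ≤ β)
    (hg : Continuous (uncurry g))
    (h : ∀ x ∈ Set.Icc 0 L, ∀ y ∈ Set.Icc 0 L, P.op x y = g x y + s * Q.p x y) :
    |s| * mass L (dirichletX L Q.p)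
      ≤ (2 + 8 * L + L ^ 2 + β * (1 + L ^ 4)) * (P.strongMass + Q.strongMass)
        + (mass L g + L ^ 4 * mass L Q.p) / 2 := by
  have test : s * mass L (dirichletX L Q.p) = squareInt L (fun x y => g x y * dirichlet L Q.p x y)
      - squareInt L (fun x y => P.op x y * dirichlet L Q.p x y) := by
    have equation : squareInt L (fun x y => P.op x y * dirichlet L Q.p x y)
        = squareInt L fun x y => g x y * dirichlet L Q.p x y
          + s * (Q.p x y * dirichlet L Q.p x y) :=
      squareInt_congr hL.le fun x hx y hy => by rw [h x hx y hy]; ring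
    rw [squareInt_add (by fun_prop) (by fun_prop), squareInt_const_mul,
      squareInt_mul_dirichlet hL.ne' Q.cont_p] at equation
    linarith
  have potential : mass L (dirichlet L Q.p) ≤ L ^ 4 * mass L Q.p :=
    mass_le_const_mul_mass hL.le (by fun_prop) Q.cont_p fun y =>
      calc rowMass L (dirichlet L Q.p) y ≤ L ^ 2 * rowMass L (dirichletX L Q.p) y :=
            rowMass_dirichlet_le hL.le Q.cont_p y
        _ ≤ L ^ 2 * (L ^ 2 * rowMass L Q.p y) := by
          gcongr
          exact rowMass_dirichletX_le hL Q.cont_p y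
        _ = L ^ 4 * rowMass L Q.p y := by ring
  calc |s| * mass L (dirichletX L Q.p) = |s * mass L (dirichletX L Q.p)| := by
        rw [abs_mul, abs_of_nonneg (mass_nonneg hL.le (dirichletX L Q.p))]
    _ ≤ |squareInt L fun x y => g x y * dirichlet L Q.p x y|
        + |squareInt L fun x y => P.op x y * dirichlet L Q.p x y| := by
      rw [test]
      exact abs_sub _ _
    _ ≤ _ := by
      linarith [P.abs_squareInt_op_mul_dirichlet_le Q hL hα hβ,
        abs_squareInt_mul_le hL.le hg (g := dirichlet L Q.p) (by fun_prop)]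

end KPProfile

/-- A solution `w` of the resolvent equation `w_x + w_xxx + ∂ₓ⁻¹ w_yy - iωw = g` on the closed
square, split into real and imaginary parts. -/
structure ResolventPair (L α β ω : ℝ) where
  re : KPProfile L α β
  im : KPProfile L α β
  srcRe : ℝ → ℝ → ℝ
  srcIm : ℝ → ℝ → ℝ
  cont_srcRe : Continuous (Function.uncurry srcRe)
  cont_srcIm : Continuous (Function.uncurry srcIm)
  op_re : ∀ x ∈ Set.Icc 0 L, ∀ y ∈ Set.Icc 0 L, re.op x y = srcRe x y + -ω * im.p x y
  op_im : ∀ x ∈ Set.Icc 0 L, ∀ y ∈ Set.Icc 0 L, im.op x y = srcIm x y + ω * re.p x y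

namespace ResolventPair

variable {L α β ω : ℝ} (R : ResolventPair L α β ω)

/-- The squared `L²` norm of the solution. -/
def totalMass : ℝ := mass L R.re.p + mass L R.im.p

/-- The squared `L²` norm of the right-hand side. -/
def dataMass : ℝ := mass L R.srcRe + mass L R.srcIm

/-- The squared `L²` norms of the boundary traces controlled by the dissipation. -/
def totalTrace : ℝ := R.re.slopeTrace + R.im.slopeTrace + (R.re.topTrace + R.im.topTrace)

/-- The sum of the strong masses of the real and imaginary parts. -/
def totalStrongMass : ℝ := R.re.strongMass + R.im.strongMass

theorem totalMass_nonneg (hL : 0 ≤ L) : 0 ≤ R.totalMass :=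
  add_nonneg (mass_nonneg hL _) (mass_nonneg hL _)

theorem dataMass_nonneg (hL : 0 ≤ L) : 0 ≤ R.dataMass :=
  add_nonneg (mass_nonneg hL _) (mass_nonneg hL _)

/- The terms containing `ω` cancel, which is why the bound is uniform in the frequency. -/
theorem two_mul_squareInt_op_le {w : ℝ → ℝ} {B ε : ℝ} (hL : 0 ≤ L) (hw : Continuous w)
    (hB : ∀ x ∈ Set.Icc 0 L, w x ^ 2 ≤ B) (hε : 0 < ε) :
    2 * squareInt L (fun x y => R.re.op x y * (w x * R.re.p x y))
        + 2 * squareInt L (fun x y => R.im.op x y * (w x * R.im.p x y))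
      ≤ ε * R.totalMass + ε⁻¹ * B * R.dataMass := by
  have := R.cont_srcRe
  have := R.cont_srcIm
  simp only [totalMass, dataMass, mass, mul_add, ← squareInt_const_mul]
  rw [← squareInt_add (by fun_prop) (by fun_prop), ← squareInt_add (by fun_prop) (by fun_prop),
    ← squareInt_add (by fun_prop) (by fun_prop), ← squareInt_add (by fun_prop) (by fun_prop)]
  refine squareInt_mono hL (by fun_prop) (by fun_prop) fun x hx y hy => ?_
  have young (p g : ℝ) : 2 * (g * (w x * p)) ≤ ε * p ^ 2 + ε⁻¹ * B * g ^ 2 :=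
    calc 2 * (g * (w x * p)) = 2 * p * (w x * g) := by ring
      _ ≤ ε * p ^ 2 + ε⁻¹ * (w x * g) ^ 2 := two_mul_le_add_mul_sq hε
      _ = ε * p ^ 2 + ε⁻¹ * w x ^ 2 * g ^ 2 := by ring
      _ ≤ _ := by gcongr; exact hB x hx
  rw [R.op_re x hx y hy, R.op_im x hx y hy]
  linarith [young (R.re.p x y) (R.srcRe x y), young (R.im.p x y) (R.srcIm x y)]

theorem dissipation_le {δ ε : ℝ} (hL : 0 ≤ L) (hδα : δ ≤ 1 - α ^ 2) (hδβ : δ ≤ 2 * β)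
    (hε : 0 < ε) : δ * R.totalTrace ≤ ε * R.totalMass + ε⁻¹ * R.dataMass := by
  have pairing := R.two_mul_squareInt_op_le (w := fun _ => 1) (B := 1) hL continuous_const
    (fun _ _ => by norm_num) hε
  simp only [one_mul, mul_one, R.re.squareInt_op_mul_self hL, R.im.squareInt_op_mul_self hL]
    at pairing
  have slope := mul_le_mul_of_nonneg_right hδα
    (add_nonneg (R.re.slopeTrace_nonneg hL) (R.im.slopeTrace_nonneg hL))
  have top := mul_le_mul_of_nonneg_right hδβ
    (add_nonneg (R.re.topTrace_nonneg hL) (R.im.topTrace_nonneg hL))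
  unfold totalTrace
  linarith [R.re.fluxTrace_nonneg hL, R.im.fluxTrace_nonneg hL]

theorem exists_dissipation (hL : 0 ≤ L) (hα : |α| < 1) (hβ : 0 < β) :
    ∃ δ > 0, ∀ ω (R : ResolventPair L α β ω), ∀ ε > 0,
      δ * R.totalTrace ≤ ε * R.totalMass + ε⁻¹ * R.dataMass := by
  have hα₂ : α ^ 2 < 1 := (sq_lt_one_iff_abs_lt_one α).2 hα
  exact ⟨min (1 - α ^ 2) (2 * β), lt_min (sub_pos.2 hα₂) (by positivity), fun ω R ε hε =>
    R.dissipation_le hL (min_le_left _ _) (min_le_right _ _) hε⟩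

theorem smoothing_le (hL : 0 ≤ L) (hα : |α| ≤ 1) (hβ : 0 ≤ β) :
    R.totalStrongMass ≤ 3 * R.totalMass + L ^ 2 * R.dataMass + (1 + L) * R.totalTrace := by
  have pairing := R.two_mul_squareInt_op_le (w := fun x => x) (B := L ^ 2) hL continuous_id
    (fun x hx => pow_le_pow_left₀ hx.1 hx.2 2) one_pos
  have slope (P : KPProfile L α β) : L * α ^ 2 * P.slopeTrace ≤ L * P.slopeTrace :=
    mul_le_mul_of_nonneg_right
      (mul_le_of_le_one_right hL ((sq_le_one_iff_abs_le_one α).2 hα)) (P.slopeTrace_nonneg hL)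
  have top (P : KPProfile L α β) : 0 ≤ L * P.topTrace := mul_nonneg hL (P.topTrace_nonneg hL)
  simp only [inv_one, one_mul] at pairing
  unfold totalStrongMass KPProfile.strongMass
  unfold totalMass dataMass at pairing
  unfold totalMass dataMass totalTrace
  linarith [R.re.le_squareInt_op_mul_x hL hβ, R.im.le_squareInt_op_mul_x hL hβ, slope R.re,
    slope R.im, top R.re, top R.im, mass_nonneg hL R.re.px, mass_nonneg hL R.im.px]

theorem exists_totalStrongMass_le (hL : 0 ≤ L) (hα : |α| < 1) (hβ : 0 < β) :
    ∃ C > 0, ∀ ω (R : ResolventPair L α β ω),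
      R.totalStrongMass ≤ C * (R.totalMass + R.dataMass) := by
  obtain ⟨δ, hδ, dissipation⟩ := exists_dissipation hL hα hβ
  refine ⟨3 + L ^ 2 + (1 + L) / δ, by positivity, fun ω R => ?_⟩
  have hA := R.totalMass_nonneg hL
  have hf := R.dataMass_nonneg hL
  have trace : R.totalTrace ≤ (R.totalMass + R.dataMass) / δ := by
    rw [le_div_iff₀' hδ]
    simpa using dissipation ω R 1 one_pos
  calc R.totalStrongMass ≤ 3 * R.totalMass + L ^ 2 * R.dataMass + (1 + L) * R.totalTrace :=
        R.smoothing_le hL hα.le hβ.le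
    _ ≤ 3 * (R.totalMass + R.dataMass) + L ^ 2 * (R.totalMass + R.dataMass)
        + (1 + L) * ((R.totalMass + R.dataMass) / δ) := by gcongr <;> linarith
    _ = _ := by ring

theorem plate_le {Ω K : ℝ} (hL : 0 < L) (hα : |α| ≤ 1) (hω : |ω| ≤ Ω) (hK : 0 < K) :
    R.totalMass ≤ exp ((2 + L ^ 2 + 2 * Ω ^ 2) * L) * (2 * R.dataMass
      + (K + (1 + L ^ 2 * β ^ 2)) * R.totalTrace + 16 * L / K * R.totalStrongMass) := by
  set μ := 2 + L ^ 2 + 2 * Ω ^ 2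
  have hμ₀ : 0 ≤ μ := by positivity
  have part {P Q : KPProfile L α β} {g : ℝ → ℝ → ℝ} {s : ℝ} (hs : s ^ 2 = ω ^ 2)
      (hg : Continuous (Function.uncurry g))
      (h : ∀ x ∈ Set.Icc 0 L, ∀ y ∈ Set.Icc 0 L, P.op x y = g x y + s * Q.p x y) :
      (μ - 1) * expMass L μ P.p - 2 * ω ^ 2 * expMass L μ Q.p ≤ exp (μ * L) * (2 * mass L g
        + (K + (1 + L ^ 2 * β ^ 2)) * (P.slopeTrace + P.topTrace)
        + 16 * L / K * P.strongMass) := by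
    have z_le : 16 * L / K * mass L P.z ≤ 16 * L / K * P.strongMass :=
      mul_le_mul_of_nonneg_left (P.le_strongMass hL.le).2.2.1 (by positivity)
    have traces : K * P.slopeTrace + (1 + L ^ 2 * β ^ 2) * P.topTrace
        ≤ (K + (1 + L ^ 2 * β ^ 2)) * (P.slopeTrace + P.topTrace) := by
      have := P.slopeTrace_nonneg hL.le
      have := P.topTrace_nonneg hL.le
      have : 0 ≤ (1 + L ^ 2 * β ^ 2) * P.slopeTrace + K * P.topTrace := by positivity
      linarith
    have boundary := mul_le_mul_of_nonneg_left (add_le_add traces z_le) (exp_pos (μ * L)).le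
    have plate := P.plate_estimate hL hα (μ := μ) (by linarith [sq_nonneg Ω]) hK
    have op_le := P.expMass_op_le Q (μ := μ) hL.le hg h
    rw [hs] at op_le
    linarith [expMass_le_mass hL.le hμ₀ hg]
  have hre := part (neg_sq ω) R.cont_srcRe R.op_re
  have him := part rfl R.cont_srcIm R.op_im
  have hω₂ : 1 ≤ μ - 1 - 2 * ω ^ 2 := by
    linarith [sq_le_sq' (neg_le_of_abs_le hω) (le_of_abs_le hω), sq_nonneg L]
  have mass_re := mass_le_expMass hL.le hμ₀ R.re.cont_p
  have mass_im := mass_le_expMass hL.le hμ₀ R.im.cont_p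
  have absorb := le_mul_of_one_le_left (add_nonneg ((mass_nonneg hL.le _).trans mass_re)
    ((mass_nonneg hL.le _).trans mass_im)) hω₂
  unfold totalMass dataMass totalTrace totalStrongMass
  linarith

theorem exists_low_frequency_bound (Ω : ℝ) (hL : 0 < L) (hα : |α| < 1) (hβ : 0 < β) :
    ∃ C, ∀ ω (R : ResolventPair L α β ω), |ω| ≤ Ω → R.totalMass ≤ C * R.dataMass := by
  obtain ⟨δ, hδ, dissipation⟩ := exists_dissipation hL.le hα hβ
  obtain ⟨C, hC, smoothing⟩ := exists_totalStrongMass_le hL.le hα hβ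
  set e := exp ((2 + L ^ 2 + 2 * Ω ^ 2) * L)
  have he₀ : 0 < e := exp_pos _
  set K := 64 * L * e * C with hK
  set k := e * (K + (1 + L ^ 2 * β ^ 2)) with hk
  have hk₀ : 0 < k := by positivity
  refine ⟨2 * (2 * e + k / δ * (δ / (4 * k))⁻¹ + 1 / 4), fun ω R hω => ?_⟩
  have trace := mul_le_mul_of_nonneg_left (dissipation ω R (δ / (4 * k)) (by positivity))
    (show 0 ≤ k / δ by positivity)
  have estimate :=
    calc R.totalMass ≤ e * (2 * R.dataMass + (K + (1 + L ^ 2 * β ^ 2)) * R.totalTrace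
          + 16 * L / K * R.totalStrongMass) := R.plate_le hL hα.le hω (by positivity)
      _ ≤ e * (2 * R.dataMass + (K + (1 + L ^ 2 * β ^ 2)) * R.totalTrace
          + 16 * L / K * (C * (R.totalMass + R.dataMass))) := by
        gcongr
        exact smoothing ω R
      _ = 2 * e * R.dataMass + k / δ * (δ * R.totalTrace)
          + 1 / 4 * (R.totalMass + R.dataMass) := by
        rw [hk, hK]
        field_simp
        ring
      _ ≤ 2 * e * R.dataMass + k / δ * (δ / (4 * k) * R.totalMass + (δ / (4 * k))⁻¹ * R.dataMass)
          + 1 / 4 * (R.totalMass + R.dataMass) := by linarith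
      _ = (2 * e + k / δ * (δ / (4 * k))⁻¹ + 1 / 4) * R.dataMass + 1 / 2 * R.totalMass := by
        field_simp
        ring
  linarith

theorem exists_frequency_gain (hL : 0 < L) (hα : |α| < 1) (hβ : 0 < β) :
    ∃ C > 0, ∀ ω (R : ResolventPair L α β ω),
      |ω| * (mass L (dirichletX L R.re.p) + mass L (dirichletX L R.im.p))
        ≤ C * (R.totalMass + R.dataMass) := by
  obtain ⟨C, hC, smoothing⟩ := exists_totalStrongMass_le hL.le hα hβ
  set c := 2 + 8 * L + L ^ 2 + β * (1 + L ^ 4)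
  refine ⟨2 * c * C + (1 + L ^ 4), by positivity, fun ω R => ?_⟩
  have hre := R.re.abs_mul_mass_dirichletX_le R.im hL hα.le hβ.le R.cont_srcRe R.op_re
  have him := R.im.abs_mul_mass_dirichletX_le R.re hL hα.le hβ.le R.cont_srcIm R.op_im
  rw [abs_neg] at hre
  have hA := R.totalMass_nonneg hL.le
  have hf := R.dataMass_nonneg hL.le
  calc |ω| * (mass L (dirichletX L R.re.p) + mass L (dirichletX L R.im.p))
      ≤ 2 * c * R.totalStrongMass + (R.dataMass + L ^ 4 * R.totalMass) / 2 := by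
        unfold totalStrongMass dataMass totalMass
        linarith
    _ ≤ 2 * c * (C * (R.totalMass + R.dataMass))
        + (1 + L ^ 4) * (R.totalMass + R.dataMass) := by
      have : 0 ≤ R.totalMass + R.dataMass / 2 + L ^ 4 * (R.totalMass / 2 + R.dataMass) := by
        positivity
      gcongr
      · exact smoothing ω R
      · linarith
    _ = _ := by ring

theorem exists_bound (hL : 0 < L) (hα : |α| < 1) (hβ : 0 < β) :
    ∃ C > 0, ∀ ω (R : ResolventPair L α β ω), R.totalMass ≤ C * R.dataMass := by
  obtain ⟨S, hS, smoothing⟩ := exists_totalStrongMass_le hL.le hα hβ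
  obtain ⟨G, hG, gain⟩ := exists_frequency_gain hL hα hβ
  obtain ⟨C, low⟩ := exists_low_frequency_bound (4 * S * G) hL hα hβ
  refine ⟨max C 1, by positivity, fun ω R => ?_⟩
  have hf := R.dataMass_nonneg hL.le
  rcases le_total |ω| (4 * S * G) with hω | hω
  · exact (low ω R hω).trans (mul_le_mul_of_nonneg_right (le_max_left _ _) hf)
  · set D := mass L (dirichletX L R.re.p) + mass L (dirichletX L R.im.p)
    have interpolation : 2 * R.totalMass
        ≤ 2 * S * D + (2 * S)⁻¹ * (mass L R.re.px + mass L R.im.px) := by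
      have hre := R.re.mass_le_interpolation hL.le (K := 2 * S) (by positivity)
      have him := R.im.mass_le_interpolation hL.le (K := 2 * S) (by positivity)
      unfold totalMass
      linarith
    have slopes : (2 * S)⁻¹ * (mass L R.re.px + mass L R.im.px)
        ≤ (R.totalMass + R.dataMass) / 2 := by
      rw [inv_mul_le_iff₀ (by positivity)]
      have hstrong : mass L R.re.px + mass L R.im.px ≤ R.totalStrongMass :=
        add_le_add (R.re.le_strongMass hL.le).2.1 (R.im.le_strongMass hL.le).2.1
      linarith [smoothing ω R]
    have small : 4 * S * D ≤ R.totalMass + R.dataMass := by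
      have hD₀ : 0 ≤ D := add_nonneg (mass_nonneg hL.le _) (mass_nonneg hL.le _)
      refine le_of_mul_le_mul_left ?_ hG
      calc G * (4 * S * D) = 4 * S * G * D := by ring
        _ ≤ |ω| * D := by gcongr
        _ ≤ _ := gain ω R
    calc R.totalMass ≤ 1 * R.dataMass := by linarith
      _ ≤ max C 1 * R.dataMass := mul_le_mul_of_nonneg_right (le_max_right _ _) hf

end ResolventPair

section PartialDerivatives

open Function

variable {V : ℝ × ℝ × ℝ → ℝ} {u : ℝ → ℝ → ℝ → ℝ}

theorem pdx3_eq_pdx_pdx_pdx (u : ℝ → ℝ → ℝ → ℝ) : pdx3 u = pdx (pdx (pdx u)) := by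
  ext x y t
  rw [pdx3, iteratedDeriv_succ', iteratedDeriv_succ', iteratedDeriv_one]
  rfl

theorem pdy2_eq_pdy_pdy (u : ℝ → ℝ → ℝ → ℝ) : pdy2 u = pdy (pdy u) := by
  ext x y t
  rw [pdy2, iteratedDeriv_succ', iteratedDeriv_one]
  rfl

theorem hasDerivAt_fderiv_x (hV : Differentiable ℝ V) (x y t : ℝ) :
    HasDerivAt (fun x => V (x, y, t)) (fderiv ℝ V (x, y, t) (1, 0, 0)) x :=
  (hV (x, y, t)).hasFDerivAt.comp_hasDerivAt x
    ((hasDerivAt_id x).prodMk (hasDerivAt_const x (y, t)))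

theorem hasDerivAt_fderiv_y (hV : Differentiable ℝ V) (x y t : ℝ) :
    HasDerivAt (fun y => V (x, y, t)) (fderiv ℝ V (x, y, t) (0, 1, 0)) y :=
  (hV (x, y, t)).hasFDerivAt.comp_hasDerivAt y
    ((hasDerivAt_const y x).prodMk ((hasDerivAt_id y).prodMk (hasDerivAt_const y t)))

theorem hasDerivAt_fderiv_t (hV : Differentiable ℝ V) (x y t : ℝ) :
    HasDerivAt (fun t => V (x, y, t)) (fderiv ℝ V (x, y, t) (0, 0, 1)) t :=
  (hV (x, y, t)).hasFDerivAt.comp_hasDerivAt t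
    ((hasDerivAt_const t x).prodMk ((hasDerivAt_const t y).prodMk (hasDerivAt_id t)))

theorem hasDerivAt_pdx (hu : Differentiable ℝ ↿u) (x y t : ℝ) :
    HasDerivAt (fun x => u x y t) (pdx u x y t) x :=
  (hasDerivAt_fderiv_x hu x y t).differentiableAt.hasDerivAt

theorem hasDerivAt_pdy (hu : Differentiable ℝ ↿u) (x y t : ℝ) :
    HasDerivAt (fun y => u x y t) (pdy u x y t) y :=
  (hasDerivAt_fderiv_y hu x y t).differentiableAt.hasDerivAt

theorem hasDerivAt_pdt (hu : Differentiable ℝ ↿u) (x y t : ℝ) :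
    HasDerivAt (fun t => u x y t) (pdt u x y t) t :=
  (hasDerivAt_fderiv_t hu x y t).differentiableAt.hasDerivAt

variable {m n : WithTop ℕ∞}

theorem contDiff_pdx (hu : ContDiff ℝ n ↿u) (hmn : m + 1 ≤ n) : ContDiff ℝ m ↿(pdx u) := by
  have hd := (hu.of_le (le_add_self.trans hmn)).differentiable_one
  have partial_eq : ↿(pdx u) = fun q => fderiv ℝ ↿u q (1, 0, 0) :=
    funext fun q => (hasDerivAt_fderiv_x hd q.1 q.2.1 q.2.2).deriv
  rw [partial_eq]
  exact (hu.fderiv_right hmn).clm_apply contDiff_const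

theorem contDiff_pdy (hu : ContDiff ℝ n ↿u) (hmn : m + 1 ≤ n) : ContDiff ℝ m ↿(pdy u) := by
  have hd := (hu.of_le (le_add_self.trans hmn)).differentiable_one
  have partial_eq : ↿(pdy u) = fun q => fderiv ℝ ↿u q (0, 1, 0) :=
    funext fun q => (hasDerivAt_fderiv_y hd q.1 q.2.1 q.2.2).deriv
  rw [partial_eq]
  exact (hu.fderiv_right hmn).clm_apply contDiff_const

theorem contDiff_pdt (hu : ContDiff ℝ n ↿u) (hmn : m + 1 ≤ n) : ContDiff ℝ m ↿(pdt u) := by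
  have hd := (hu.of_le (le_add_self.trans hmn)).differentiable_one
  have partial_eq : ↿(pdt u) = fun q => fderiv ℝ ↿u q (0, 0, 1) :=
    funext fun q => (hasDerivAt_fderiv_t hd q.1 q.2.1 q.2.2).deriv
  rw [partial_eq]
  exact (hu.fderiv_right hmn).clm_apply contDiff_const

end PartialDerivatives

/-- The weighted integral of `f(x,y,t)` over `a < t < b`, not normalised by the weight `φ`. -/
def timeAverage (a b : ℝ) (φ : ℝ → ℝ) (f : ℝ → ℝ → ℝ → ℝ) (x y : ℝ) : ℝ :=
  ∫ t in a..b, φ t * f x y t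

section TimeAverage

open Function

variable {a b x y : ℝ} {φ : ℝ → ℝ} {f f' g : ℝ → ℝ → ℝ → ℝ}

theorem continuous_timeAverage (a b : ℝ) (hφ : Continuous φ) (hf : Continuous ↿f) :
    Continuous (uncurry (timeAverage a b φ f)) := by
  unfold timeAverage
  fun_prop

theorem hasDerivAt_timeAverage_x (a b : ℝ) (hφ : Continuous φ) (hf : Continuous ↿f)
    (hf' : Continuous ↿f') (h : ∀ x y t, HasDerivAt (fun x => f x y t) (f' x y t) x) (x y : ℝ) :
    HasDerivAt (fun x => timeAverage a b φ f x y) (timeAverage a b φ f' x y) x :=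
  hasDerivAt_intervalIntegral_of_continuous (f := fun x t => φ t * f x y t)
    (f' := fun x t => φ t * f' x y t) (by fun_prop) (by fun_prop)
    (fun x t => (h x y t).const_mul (φ t)) a b x

theorem hasDerivAt_timeAverage_y (a b : ℝ) (hφ : Continuous φ) (hf : Continuous ↿f)
    (hf' : Continuous ↿f') (h : ∀ x y t, HasDerivAt (fun y => f x y t) (f' x y t) y) (x y : ℝ) :
    HasDerivAt (fun y => timeAverage a b φ f x y) (timeAverage a b φ f' x y) y :=
  hasDerivAt_intervalIntegral_of_continuous (f := fun y t => φ t * f x y t)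
    (f' := fun y t => φ t * f' x y t) (by fun_prop) (by fun_prop)
    (fun y t => (h x y t).const_mul (φ t)) a b y

theorem timeAverage_eq_const_mul (c : ℝ) {x' y' : ℝ} (hab : a ≤ b)
    (h : ∀ t ∈ Set.Icc a b, f x y t = c * g x' y' t) :
    timeAverage a b φ f x y = c * timeAverage a b φ g x' y' := by
  unfold timeAverage
  rw [← intervalIntegral.integral_const_mul]
  refine intervalIntegral.integral_congr fun t ht => ?_
  rw [Set.uIcc_of_le hab] at ht
  simp only [h t ht]
  ring

theorem timeAverage_eq_zero (hab : a ≤ b) (h : ∀ t ∈ Set.Icc a b, f x y t = 0) :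
    timeAverage a b φ f x y = 0 := by
  simpa using timeAverage_eq_const_mul (φ := φ) (g := f) (x' := x) (y' := y) 0 hab
    (by simpa using h)

theorem timeAverage_add_const_mul_weight {ψ : ℝ → ℝ} (a b c x y : ℝ) (hφ : Continuous φ)
    (hψ : Continuous ψ) (hf : Continuous ↿f) :
    timeAverage a b (fun t => φ t + c * ψ t) f x y
      = timeAverage a b φ f x y + c * timeAverage a b ψ f x y := by
  unfold timeAverage
  rw [← intervalIntegral.integral_const_mul,
    ← intervalIntegral.integral_add (Continuous.intervalIntegrable (by fun_prop) _ _)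
      (Continuous.intervalIntegrable (by fun_prop) _ _)]
  congr with t
  ring

theorem pxInv_timeAverage (a b L : ℝ) (hφ : Continuous φ) (hf : Continuous ↿f) (x y : ℝ) :
    pxInv L (timeAverage a b φ f) x y
      = timeAverage a b φ (fun x y t => pxInv L (fun s y => f s y t) x y) x y := by
  unfold pxInv timeAverage
  rw [intervalIntegral_swap_of_continuous (f := fun s t => φ t * f s y t) (by fun_prop)]
  simp only [intervalIntegral.integral_const_mul, mul_neg, intervalIntegral.integral_neg]

end TimeAverage

theorem energy_eq_half_mass {L : ℝ} {u : ℝ → ℝ → ℝ → ℝ} (hu : Continuous ↿u) (t : ℝ) :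
    energy L u t = 1 / 2 * mass L fun x y => u x y t := by
  rw [energy, mass, squareInt,
    intervalIntegral_swap_of_continuous (f := fun x y => u x y t ^ 2) (by fun_prop)]

theorem energy_nonneg {L : ℝ} (hL : 0 ≤ L) (u : ℝ → ℝ → ℝ → ℝ) (t : ℝ) : 0 ≤ energy L u t :=
  mul_nonneg one_half_pos.le <| intervalIntegral.integral_nonneg hL fun _ _ =>
    intervalIntegral.integral_nonneg hL fun _ _ => sq_nonneg _

theorem continuous_energy {L : ℝ} {u : ℝ → ℝ → ℝ → ℝ} (hu : Continuous ↿u) :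
    Continuous (energy L u) := by
  unfold energy
  fun_prop

theorem mass_add_mass {L : ℝ} {f g : ℝ → ℝ → ℝ} (hf : Continuous (Function.uncurry f))
    (hg : Continuous (Function.uncurry g)) :
    mass L f + mass L g = squareInt L fun x y => f x y ^ 2 + g x y ^ 2 :=
  (squareInt_add (f := fun x y => f x y ^ 2) (g := fun x y => g x y ^ 2) (by fun_prop)
    (by fun_prop)).symm

theorem squareInt_intervalIntegral {L : ℝ} {f : ℝ → ℝ → ℝ → ℝ} (hf : Continuous ↿f) (a b : ℝ) :
    squareInt L (fun x y => ∫ t in a..b, f x y t)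
      = ∫ t in a..b, squareInt L fun x y => f x y t := by
  unfold squareInt
  rw [← intervalIntegral_swap_of_continuous (f := fun y t => ∫ x in (0:ℝ)..L, f x y t)
    (by fun_prop)]
  congr with y
  exact intervalIntegral_swap_of_continuous (f := fun x t => f x y t) (by fun_prop) _ _ _ _

theorem hasDerivAt_squareInt {f f' : ℝ → ℝ → ℝ → ℝ} (hf : Continuous ↿f) (hf' : Continuous ↿f')
    (h : ∀ x y t, HasDerivAt (fun t => f x y t) (f' x y t) t) (L t : ℝ) :
    HasDerivAt (fun t => squareInt L fun x y => f x y t) (squareInt L fun x y => f' x y t) t :=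
  hasDerivAt_intervalIntegral_of_continuous (f := fun t y => ∫ x in (0:ℝ)..L, f x y t)
    (f' := fun t y => ∫ x in (0:ℝ)..L, f' x y t) (by fun_prop) (by fun_prop)
    (fun t y => hasDerivAt_intervalIntegral_of_continuous (f := fun t x => f x y t)
      (f' := fun t x => f' x y t) (by fun_prop) (by fun_prop) (fun t x => h x y t) 0 L t) 0 L t

theorem hasSum_squareInt_of_nonneg {ι : Type*} [Countable ι] {F : ι → ℝ → ℝ → ℝ} {f : ℝ → ℝ → ℝ}
    {L : ℝ} (hL : 0 ≤ L) (hF : ∀ n, Continuous (Function.uncurry (F n)))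
    (hf : Continuous (Function.uncurry f)) (hF₀ : ∀ n x y, 0 ≤ F n x y)
    (h : ∀ x y, HasSum (fun n => F n x y) (f x y)) :
    HasSum (fun n => squareInt L (F n)) (squareInt L f) :=
  hasSum_intervalIntegral_of_nonneg (fun n => by have := hF n; fun_prop) (by fun_prop)
    (fun n y => intervalIntegral.integral_nonneg hL fun x _ => hF₀ n x y)
    (fun y => hasSum_intervalIntegral_of_nonneg (fun n => by have := hF n; fun_prop) (by fun_prop)
      (fun n x => hF₀ n x y) (fun x => h x y) 0 L) 0 L

theorem hasSum_mass_timeAverage {L a b : ℝ} {u : ℝ → ℝ → ℝ → ℝ} {c : ℝ → ℝ} (hL : 0 ≤ L)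
    (hab : a < b) (hu : Continuous ↿u) (hc : Continuous c) :
    HasSum (fun n : ℤ => mass L (timeAverage a b (fun t => cos (2 * π * n / (b - a) * t) * c t) u)
        + mass L (timeAverage a b (fun t => sin (2 * π * n / (b - a) * t) * c t) u))
      ((b - a) * (2 * ∫ t in a..b, c t ^ 2 * energy L u t)) := by
  have total : (b - a) * (2 * ∫ t in a..b, c t ^ 2 * energy L u t)
      = squareInt L fun x y => (b - a) * ∫ t in a..b, (c t * u x y t) ^ 2 := by
    rw [squareInt_const_mul, squareInt_intervalIntegral (f := fun x y t => (c t * u x y t) ^ 2)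
      (by fun_prop), ← intervalIntegral.integral_const_mul]
    simp only [mul_pow, squareInt_const_mul, energy_eq_half_mass hu, mass]
    congr with t
    ring
  have continuous_coeff {φ : ℝ → ℝ} (hφ : Continuous φ) :
      Continuous (Function.uncurry (timeAverage a b φ u)) := continuous_timeAverage a b hφ hu
  have hcos (n : ℤ) := continuous_coeff (φ := fun t => cos (2 * π * n / (b - a) * t) * c t)
    (by fun_prop)
  have hsin (n : ℤ) := continuous_coeff (φ := fun t => sin (2 * π * n / (b - a) * t) * c t)
    (by fun_prop)
  rw [total]
  simp only [mass_add_mass (hcos _) (hsin _)]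
  refine hasSum_squareInt_of_nonneg hL (fun n => ((hcos n).pow 2).add ((hsin n).pow 2))
    (by fun_prop) (fun n x y => by positivity) fun x y => ?_
  simpa only [timeAverage, mul_assoc] using
    hasSum_sq_integral_cos_add_sq_integral_sin (g := fun t => c t * u x y t) (by fun_prop) hab

namespace IsKPSolutionInf

open Function

variable {L α β a b : ℝ} {u : ℝ → ℝ → ℝ → ℝ} {φ c c' : ℝ → ℝ}

section Regularity

theorem contDiff (hu : IsKPSolutionInf L α β u) : ContDiff ℝ 3 ↿u := hu.1

theorem contDiff_pdx (hu : IsKPSolutionInf L α β u) : ContDiff ℝ 2 ↿(pdx u) :=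
  _root_.contDiff_pdx hu.contDiff two_add_one_eq_three.le

theorem contDiff_pdx_pdx (hu : IsKPSolutionInf L α β u) : ContDiff ℝ 1 ↿(pdx (pdx u)) :=
  _root_.contDiff_pdx hu.contDiff_pdx one_add_one_eq_two.le

theorem contDiff_pdy (hu : IsKPSolutionInf L α β u) : ContDiff ℝ 2 ↿(pdy u) :=
  _root_.contDiff_pdy hu.contDiff two_add_one_eq_three.le

theorem continuous (hu : IsKPSolutionInf L α β u) : Continuous ↿u := hu.contDiff.continuous

theorem continuous_pdx (hu : IsKPSolutionInf L α β u) : Continuous ↿(pdx u) :=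
  hu.contDiff_pdx.continuous

theorem continuous_pdx_pdx (hu : IsKPSolutionInf L α β u) : Continuous ↿(pdx (pdx u)) :=
  hu.contDiff_pdx_pdx.continuous

theorem continuous_pdx3 (hu : IsKPSolutionInf L α β u) : Continuous ↿(pdx3 u) := by
  rw [pdx3_eq_pdx_pdx_pdx]
  exact (_root_.contDiff_pdx (m := 0) hu.contDiff_pdx_pdx (zero_add 1).le).continuous

theorem continuous_pdy (hu : IsKPSolutionInf L α β u) : Continuous ↿(pdy u) :=
  hu.contDiff_pdy.continuous

theorem continuous_pdy2 (hu : IsKPSolutionInf L α β u) : Continuous ↿(pdy2 u) := by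
  rw [pdy2_eq_pdy_pdy]
  exact (_root_.contDiff_pdy (m := 1) hu.contDiff_pdy one_add_one_eq_two.le).continuous

theorem continuous_pdt (hu : IsKPSolutionInf L α β u) : Continuous ↿(pdt u) :=
  (contDiff_pdt (m := 2) hu.contDiff two_add_one_eq_three.le).continuous

theorem hasDerivAt_x (hu : IsKPSolutionInf L α β u) (x y t : ℝ) :
    HasDerivAt (fun x => u x y t) (pdx u x y t) x :=
  hasDerivAt_pdx (hu.contDiff.differentiable three_ne_zero) x y t

theorem hasDerivAt_pdx_x (hu : IsKPSolutionInf L α β u) (x y t : ℝ) :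
    HasDerivAt (fun x => pdx u x y t) (pdx (pdx u) x y t) x :=
  hasDerivAt_pdx (hu.contDiff_pdx.differentiable two_ne_zero) x y t

theorem hasDerivAt_pdx_pdx_x (hu : IsKPSolutionInf L α β u) (x y t : ℝ) :
    HasDerivAt (fun x => pdx (pdx u) x y t) (pdx3 u x y t) x := by
  rw [pdx3_eq_pdx_pdx_pdx]
  exact hasDerivAt_pdx (hu.contDiff_pdx_pdx.differentiable one_ne_zero) x y t

theorem hasDerivAt_y (hu : IsKPSolutionInf L α β u) (x y t : ℝ) :
    HasDerivAt (fun y => u x y t) (pdy u x y t) y :=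
  hasDerivAt_pdy (hu.contDiff.differentiable three_ne_zero) x y t

theorem hasDerivAt_pdy_y (hu : IsKPSolutionInf L α β u) (x y t : ℝ) :
    HasDerivAt (fun y => pdy u x y t) (pdy2 u x y t) y := by
  rw [pdy2_eq_pdy_pdy]
  exact hasDerivAt_pdy (hu.contDiff_pdy.differentiable two_ne_zero) x y t

theorem hasDerivAt_t (hu : IsKPSolutionInf L α β u) (x y t : ℝ) :
    HasDerivAt (fun t => u x y t) (pdt u x y t) t :=
  hasDerivAt_pdt (hu.contDiff.differentiable three_ne_zero) x y t

end Regularity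

theorem equation_closed (hu : IsKPSolutionInf L α β u) (hL : 0 < L) {x y t : ℝ}
    (hx : x ∈ Set.Icc 0 L) (hy : y ∈ Set.Icc 0 L) (ht : 0 ≤ t) :
    pdx u x y t + pdx3 u x y t + pxInv L (fun s y => pdy2 u s y t) x y = -pdt u x y t := by
  have := hu.continuous_pdx
  have := hu.continuous_pdx3
  have := hu.continuous_pdy2
  have := hu.continuous_pdt
  have continuous_nonlocal : Continuous fun q : ℝ × ℝ × ℝ =>
      pxInv L (fun s y => pdy2 u s y q.2.2) q.1 q.2.1 := by
    have h : Continuous fun q : ℝ × ℝ × ℝ => ∫ s in L..q.1, pdy2 u s q.2.1 q.2.2 := by fun_prop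
    simpa only [pxInv, ← intervalIntegral.integral_symm] using h
  have extends_to_closure : Set.EqOn
      (fun q : ℝ × ℝ × ℝ => pdx u q.1 q.2.1 q.2.2 + pdx3 u q.1 q.2.1 q.2.2
        + pxInv L (fun s y => pdy2 u s y q.2.2) q.1 q.2.1) (fun q => -pdt u q.1 q.2.1 q.2.2)
      (Set.Icc 0 L ×ˢ Set.Icc 0 L ×ˢ Set.Ici 0) := by
    rw [← closure_Ioo hL.ne, ← closure_Ioi, ← closure_prod_eq, ← closure_prod_eq]
    refine Set.EqOn.closure ?_ (by fun_prop) (by fun_prop)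
    rintro ⟨x, y, t⟩ ⟨hx, hy, ht⟩
    linear_combination hu.2.1 x hx y hy t ht
  exact extends_to_closure (Set.mk_mem_prod hx (Set.mk_mem_prod hy ht))

/-- The spatial profile of a solution at time `t`. -/
def slice (hu : IsKPSolutionInf L α β u) {t : ℝ} (ht : 0 ≤ t) : KPProfile L α β where
  p x y := u x y t
  px x y := pdx u x y t
  pxx x y := pdx (pdx u) x y t
  pxxx x y := pdx3 u x y t
  py x y := pdy u x y t
  pyy x y := pdy2 u x y t
  cont_p := by have := hu.continuous; fun_prop
  cont_px := by have := hu.continuous_pdx; fun_prop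
  cont_pxxx := by have := hu.continuous_pdx3; fun_prop
  cont_py := by have := hu.continuous_pdy; fun_prop
  cont_pyy := by have := hu.continuous_pdy2; fun_prop
  hasDerivAt_p x y := hu.hasDerivAt_x x y t
  hasDerivAt_px x y := hu.hasDerivAt_pdx_x x y t
  hasDerivAt_pxx x y := hu.hasDerivAt_pdx_pdx_x x y t
  hasDerivAt_p_param x y := hu.hasDerivAt_y x y t
  hasDerivAt_py_param x y := hu.hasDerivAt_pdy_y x y t
  p_left y hy := (hu.2.2.1 y hy t ht).1
  p_right y hy := (hu.2.2.1 y hy t ht).2.1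
  px_right y hy := (hu.2.2.1 y hy t ht).2.2
  py_top x hx := (hu.2.2.2 x hx t ht).1
  py_bottom x hx := (hu.2.2.2 x hx t ht).2

/-- The `φ`-weighted time integral of a solution as a spatial profile: the boundary conditions are
linear and time independent, so they survive the integration. -/
def average (hu : IsKPSolutionInf L α β u) (hφ : Continuous φ) (ha : 0 ≤ a) (hab : a ≤ b) :
    KPProfile L α β where
  p := timeAverage a b φ u
  px := timeAverage a b φ (pdx u)
  pxx := timeAverage a b φ (pdx (pdx u))
  pxxx := timeAverage a b φ (pdx3 u)
  py := timeAverage a b φ (pdy u)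
  pyy := timeAverage a b φ (pdy2 u)
  cont_p := continuous_timeAverage a b hφ hu.continuous
  cont_px := continuous_timeAverage a b hφ hu.continuous_pdx
  cont_pxxx := continuous_timeAverage a b hφ hu.continuous_pdx3
  cont_py := continuous_timeAverage a b hφ hu.continuous_pdy
  cont_pyy := continuous_timeAverage a b hφ hu.continuous_pdy2
  hasDerivAt_p := hasDerivAt_timeAverage_x a b hφ hu.continuous hu.continuous_pdx hu.hasDerivAt_x
  hasDerivAt_px :=
    hasDerivAt_timeAverage_x a b hφ hu.continuous_pdx hu.continuous_pdx_pdx hu.hasDerivAt_pdx_x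
  hasDerivAt_pxx :=
    hasDerivAt_timeAverage_x a b hφ hu.continuous_pdx_pdx hu.continuous_pdx3 hu.hasDerivAt_pdx_pdx_x
  hasDerivAt_p_param :=
    hasDerivAt_timeAverage_y a b hφ hu.continuous hu.continuous_pdy hu.hasDerivAt_y
  hasDerivAt_py_param :=
    hasDerivAt_timeAverage_y a b hφ hu.continuous_pdy hu.continuous_pdy2 hu.hasDerivAt_pdy_y
  p_left y hy := timeAverage_eq_zero hab fun t ht => (hu.2.2.1 y hy t (ha.trans ht.1)).1
  p_right y hy := timeAverage_eq_zero hab fun t ht => (hu.2.2.1 y hy t (ha.trans ht.1)).2.1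
  px_right y hy :=
    timeAverage_eq_const_mul α hab fun t ht => (hu.2.2.1 y hy t (ha.trans ht.1)).2.2
  py_top x hx := timeAverage_eq_const_mul β hab fun t ht => (hu.2.2.2 x hx t (ha.trans ht.1)).1
  py_bottom x hx := timeAverage_eq_zero hab fun t ht => (hu.2.2.2 x hx t (ha.trans ht.1)).2

theorem average_op {φ' : ℝ → ℝ} (hu : IsKPSolutionInf L α β u) (hL : 0 < L) (hφ : Continuous φ)
    (hφ' : Continuous φ') (h : ∀ t, HasDerivAt φ (φ' t) t) (ha : 0 ≤ a) (hab : a ≤ b)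
    (hφa : φ a = 0) (hφb : φ b = 0) {x y : ℝ} (hx : x ∈ Set.Icc 0 L) (hy : y ∈ Set.Icc 0 L) :
    (hu.average hφ ha hab).op x y = timeAverage a b φ' u x y := by
  have := hu.continuous_pdx
  have := hu.continuous_pdx3
  have := hu.continuous_pdy2
  have := hu.continuous_pdt
  have by_parts : ∫ t in a..b, φ t * pdt u x y t = -∫ t in a..b, φ' t * u x y t := by
    rw [intervalIntegral.integral_mul_deriv_eq_deriv_mul (fun t _ => h t)
      (fun t _ => hu.hasDerivAt_t x y t) (hφ'.intervalIntegrable _ _)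
      (Continuous.intervalIntegrable (by fun_prop) _ _), hφa, hφb]
    ring
  calc (hu.average hφ ha hab).op x y
      = timeAverage a b φ (pdx u) x y + timeAverage a b φ (pdx3 u) x y
        + pxInv L (timeAverage a b φ (pdy2 u)) x y := rfl
    _ = ∫ t in a..b, φ t * (pdx u x y t + pdx3 u x y t
        + pxInv L (fun s y => pdy2 u s y t) x y) := by
      rw [pxInv_timeAverage a b L hφ hu.continuous_pdy2]
      simp only [timeAverage, mul_add]
      rw [← intervalIntegral.integral_add (Continuous.intervalIntegrable (by fun_prop) _ _)
          (Continuous.intervalIntegrable (by fun_prop) _ _),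
        ← intervalIntegral.integral_add (Continuous.intervalIntegrable (by fun_prop) _ _)
          (Continuous.intervalIntegrable (by unfold pxInv; fun_prop) _ _)]
    _ = ∫ t in a..b, φ t * -pdt u x y t := by
      refine intervalIntegral.integral_congr fun t ht => ?_
      rw [Set.uIcc_of_le hab] at ht
      simp only [hu.equation_closed hL hx hy (ha.trans ht.1)]
    _ = timeAverage a b φ' u x y := by
      simp only [mul_neg, intervalIntegral.integral_neg, by_parts, neg_neg, timeAverage]

/-- The Fourier coefficient at frequency `ω` of a solution cut off by `c`: since `c` vanishes at
the ends of the time interval, it solves the resolvent equation with `c'` in the source. -/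
def resolventPair (hu : IsKPSolutionInf L α β u) (hL : 0 < L) (hc' : Continuous c')
    (h : ∀ t, HasDerivAt c (c' t) t) (ha : 0 ≤ a) (hab : a ≤ b) (hca : c a = 0) (hcb : c b = 0)
    (ω : ℝ) : ResolventPair L α β ω where
  re := hu.average (φ := fun t => cos (ω * t) * c t)
    (by have := continuous_iff_continuousAt.2 fun t => (h t).continuousAt; fun_prop) ha hab
  im := hu.average (φ := fun t => sin (ω * t) * c t)
    (by have := continuous_iff_continuousAt.2 fun t => (h t).continuousAt; fun_prop) ha hab
  srcRe := timeAverage a b (fun t => cos (ω * t) * c' t) u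
  srcIm := timeAverage a b (fun t => sin (ω * t) * c' t) u
  cont_srcRe := continuous_timeAverage a b (by fun_prop) hu.continuous
  cont_srcIm := continuous_timeAverage a b (by fun_prop) hu.continuous
  op_re x hx y hy := by
    have hc : Continuous c := continuous_iff_continuousAt.2 fun t => (h t).continuousAt
    have hcos (t : ℝ) : HasDerivAt (fun t => cos (ω * t) * c t)
        (cos (ω * t) * c' t + -ω * (sin (ω * t) * c t)) t :=
      (((hasDerivAt_id t).const_mul ω).cos.mul (h t)).congr_deriv (by simp only [id_eq]; ring)
    rw [hu.average_op hL _ (by fun_prop) hcos ha hab (by simp [hca]) (by simp [hcb]) hx hy]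
    exact timeAverage_add_const_mul_weight a b (-ω) x y (by fun_prop) (by fun_prop) hu.continuous
  op_im x hx y hy := by
    have hc : Continuous c := continuous_iff_continuousAt.2 fun t => (h t).continuousAt
    have hsin (t : ℝ) : HasDerivAt (fun t => sin (ω * t) * c t)
        (sin (ω * t) * c' t + ω * (cos (ω * t) * c t)) t :=
      (((hasDerivAt_id t).const_mul ω).sin.mul (h t)).congr_deriv (by simp only [id_eq]; ring)
    rw [hu.average_op hL _ (by fun_prop) hsin ha hab (by simp [hca]) (by simp [hcb]) hx hy]
    exact timeAverage_add_const_mul_weight a b ω x y (by fun_prop) (by fun_prop) hu.continuous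

theorem hasDerivAt_energy (hu : IsKPSolutionInf L α β u) (hL : 0 < L) {t : ℝ} (ht : 0 ≤ t) :
    HasDerivAt (energy L u) (-((1 - α ^ 2) / 2 * (hu.slice ht).slopeTrace
      + 1 / 2 * (hu.slice ht).fluxTrace + β * (hu.slice ht).topTrace)) t := by
  have := hu.continuous
  have := hu.continuous_pdt
  have hderiv := (hasDerivAt_squareInt (f := fun x y t => u x y t ^ 2)
    (f' := fun x y t => 2 * u x y t * pdt u x y t) (by fun_prop) (by fun_prop)
    (fun x y t => ((hu.hasDerivAt_t x y t).pow 2).congr_deriv (by simp)) L t).const_mul (1 / 2)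
  have power : 1 / 2 * squareInt L (fun x y => 2 * u x y t * pdt u x y t)
      = -squareInt L fun x y => (hu.slice ht).op x y * (hu.slice ht).p x y := by
    rw [← squareInt_const_mul, ← neg_one_mul, ← squareInt_const_mul]
    refine squareInt_congr hL.le fun x hx y hy => ?_
    change _ = -1 * ((pdx u x y t + pdx3 u x y t + pxInv L (fun s y => pdy2 u s y t) x y) * u x y t)
    rw [hu.equation_closed hL hx hy ht]
    ring
  rw [power, (hu.slice ht).squareInt_op_mul_self hL.le] at hderiv
  exact hderiv.congr_of_eventuallyEq (.of_forall (energy_eq_half_mass hu.continuous))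

theorem antitoneOn_energy (hu : IsKPSolutionInf L α β u) (hL : 0 < L) (hα : |α| < 1)
    (hβ : 0 ≤ β) : AntitoneOn (energy L u) (Set.Ici 0) := by
  refine antitoneOn_of_deriv_nonpos (convex_Ici 0) (continuous_energy hu.continuous).continuousOn
    (fun t ht => (hu.hasDerivAt_energy hL (interior_subset ht)).differentiableAt
      |>.differentiableWithinAt) fun t ht => ?_
  rw [(hu.hasDerivAt_energy hL (interior_subset ht)).deriv, neg_nonpos]
  have slope := (hu.slice (interior_subset ht)).slopeTrace_nonneg hL.le
  have flux := (hu.slice (interior_subset ht)).fluxTrace_nonneg hL.le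
  have top := (hu.slice (interior_subset ht)).topTrace_nonneg hL.le
  have : 0 ≤ 1 - α ^ 2 := sub_nonneg.2 ((sq_lt_one_iff_abs_lt_one α).2 hα).le
  positivity

theorem exists_integral_sq_mul_energy_le (hL : 0 < L) (hα : |α| < 1) (hβ : 0 < β) :
    ∃ C > 0, ∀ u, IsKPSolutionInf L α β u → ∀ a b : ℝ, 0 ≤ a → a < b → ∀ c c' : ℝ → ℝ,
      Continuous c' → (∀ t, HasDerivAt c (c' t) t) → c a = 0 → c b = 0 →
      ∫ t in a..b, c t ^ 2 * energy L u t ≤ C * ∫ t in a..b, c' t ^ 2 * energy L u t := by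
  obtain ⟨C, hC, resolvent_bound⟩ := ResolventPair.exists_bound hL hα hβ
  refine ⟨C, hC, fun u hu a b ha hab c c' hc' h hca hcb => ?_⟩
  have hc : Continuous c := continuous_iff_continuousAt.2 fun t => (h t).continuousAt
  have parseval := hasSum_le
    (fun n : ℤ => resolvent_bound _
      (hu.resolventPair hL hc' h ha hab.le hca hcb (2 * π * n / (b - a))))
    (hasSum_mass_timeAverage hL.le hab hu.continuous hc)
    ((hasSum_mass_timeAverage hL.le hab hu.continuous hc').mul_left C)
  refine le_of_mul_le_mul_left ?_ (mul_pos (sub_pos.2 hab) two_pos)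
  linarith

/-- Cut off by the half-period `sin (l (t - a))`, which vanishes at both ends of `[a, a + π / l]`:
the derivative costs a factor `l`, and `l` is chosen so small that the energy halves. -/
theorem exists_energy_halving (hL : 0 < L) (hα : |α| < 1) (hβ : 0 < β) :
    ∃ T > 0, ∀ u, IsKPSolutionInf L α β u → ∀ a ≥ 0, energy L u (a + T) ≤ energy L u a / 2 := by
  obtain ⟨C, hC, cutoff_bound⟩ := exists_integral_sq_mul_energy_le hL hα hβ
  set l := √(2 * C)⁻¹
  have hl : 0 < l := by positivity
  have l_sq : C * l ^ 2 = 1 / 2 := by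
    rw [sq_sqrt (by positivity)]
    field_simp
  refine ⟨π / l, by positivity, fun u hu a ha => ?_⟩
  have hm := continuous_energy (L := L) hu.continuous
  have hanti : AntitoneOn (energy L u) (Set.Icc a (a + π / l)) :=
    (hu.antitoneOn_energy hL hα hβ.le).mono fun t ht => ha.trans ht.1
  have hsin (t : ℝ) : HasDerivAt (fun t => sin (l * (t - a))) (l * cos (l * (t - a))) t := by
    simpa [mul_comm] using (((hasDerivAt_id t).sub_const a).const_mul l).sin
  refine le_of_mul_le_mul_right ?_ (show 0 < π / l / 2 by positivity)
  calc energy L u (a + π / l) * (π / l / 2)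
      ≤ ∫ t in a..a + π / l, sin (l * (t - a)) ^ 2 * energy L u t :=
        mul_le_integral_sin_sq_mul hl hm hanti
    _ ≤ C * ∫ t in a..a + π / l, (l * cos (l * (t - a))) ^ 2 * energy L u t :=
        cutoff_bound u hu a _ ha (lt_add_of_pos_right a (by positivity)) _ _ (by fun_prop) hsin
          (by simp) (by simp [mul_div_cancel₀ π hl.ne'])
    _ = 1 / 2 * ∫ t in a..a + π / l, cos (l * (t - a)) ^ 2 * energy L u t := by
        simp only [mul_pow, mul_assoc, intervalIntegral.integral_const_mul, ← l_sq]
    _ ≤ 1 / 2 * (energy L u a * (π / l / 2)) := by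
        gcongr
        exact integral_cos_sq_mul_le hl hm hanti
    _ = energy L u a / 2 * (π / l / 2) := by ring

end IsKPSolutionInf

/-- Global uniform exponential stabilization of the closed-loop linear KP-II system. -/
theorem kp_global_uniform_stabilization (L α β : ℝ) (hL : 0 < L)
    (hα0 : 0 < |α|) (hα1 : |α| < 1) (hβ : 0 < β) :
    ∃ κ > (0:ℝ), ∃ θ > (0:ℝ), ∀ u : ℝ → ℝ → ℝ → ℝ, IsKPSolutionInf L α β u →
      ∀ t > (0:ℝ), energy L u t ≤ κ * energy L u 0 * Real.exp (-2 * θ * t) := by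
  obtain ⟨T, hT, halving⟩ := IsKPSolutionInf.exists_energy_halving hL hα1 hβ
  refine ⟨2, two_pos, log 2 / T / 2, by positivity, fun u hu t ht => ?_⟩
  calc energy L u t ≤ 2 * energy L u 0 * exp (-(log 2 / T * t)) :=
        le_exp_of_halving hT (hu.antitoneOn_energy hL hα1 hβ.le) (energy_nonneg hL.le u 0)
          (halving u hu) ht.le
    _ = 2 * energy L u 0 * exp (-2 * (log 2 / T / 2) * t) := by ring_nf

end
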